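/- Let n = 21, and consider the weight vectors ω_1 = (3,3,1,1) and ω_2 = (3,3,3), both of degree 21. Then the subspaces of GL_4(F_2)-invariants of the weight subquotients (Q_{21})^{ω_1} and (Q_{21})^{ω_2} are both trivial. -/

import Mathlib

/-!
Common setup: the polynomial algebra `P_4 = F_2[x_1,x_2,x_3,x_4]` (variables `X 0, ..., X 3`),
the Steenrod action, hit polynomials, the cohit spaces `Q_n`, and the (induced) actions of
`GL_4(F_2)` and of the symmetric group `Σ_4` on `Q_n`.
-/

open MvPolynomial

noncomputable section

abbrev kk : Type := ZMod 2
abbrev P4 : Type := MvPolynomial (Fin 4) kk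

/-- The total Steenrod square: the algebra endomorphism of `P4` with `X i ↦ X i + (X i)^2`.
For `g` homogeneous of degree `d`, `Sq^t g` is the degree-`d+t` homogeneous component
of `sqTotal g`. -/
def sqTotal : P4 →ₐ[kk] P4 := aeval fun i => X i + X i ^ 2

/-- The homogeneous polynomials of degree `n`, i.e. `(P_4)_n`, as a submodule. -/
def homog (n : ℕ) : Submodule kk P4 := homogeneousSubmodule (Fin 4) kk n

/-- The subspace `H_n` of hit polynomials of degree `n`: it is spanned by the elements
`Sq^{n-d}(g) = (sqTotal g)_n` for `g` homogeneous of degree `d < n`, i.e. by all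
`∑_{t>0} Sq^t(f_t)` with `f_t ∈ (P_4)_{n-t}`. -/
def hitSub (n : ℕ) : Submodule kk P4 :=
  Submodule.span kk
    {p | ∃ d, d < n ∧ ∃ g ∈ homog d, p = homogeneousComponent n (sqTotal g)}

/-- The cohit space `Q_n = (P_4)_n / H_n`. -/
abbrev Qn (n : ℕ) :=
  ↥(homog n) ⧸ ((hitSub n).comap (homog n).subtype)

/-- Projection of a polynomial onto its degree-`n` part, landing in `homog n`. -/
def toHomog (n : ℕ) : P4 →ₗ[kk] homog n :=
  (homogeneousComponent n).codRestrict (homog n) fun f => homogeneousComponent_mem n f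

/-- The class in `Q_n` of (the degree-`n` component of) a polynomial.  For `f`
homogeneous of degree `n` this is the class `[f]` of `f`. -/
def Qmk (n : ℕ) : P4 →ₗ[kk] Qn n :=
  ((hitSub n).comap (homog n).subtype).mkQ.comp (toHomog n)

/-- Substitution action of a matrix `M`: the algebra endomorphism `X i ↦ ∑ j M i j • X j`. -/
def substM (M : Matrix (Fin 4) (Fin 4) kk) : P4 →ₐ[kk] P4 :=
  aeval fun i => ∑ j, M i j • X j

/-- The set of invertible `4 × 4` matrices over `F_2`, i.e. `GL_4(F_2)`. -/
def glSet : Set (Matrix (Fin 4) (Fin 4) kk) := {M | IsUnit M}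

/-- The set of permutation matrices, i.e. `Σ_4 ⊆ GL_4(F_2)`. -/
def permSet : Set (Matrix (Fin 4) (Fin 4) kk) :=
  {M | ∃ σ : Equiv.Perm (Fin 4), M = σ.toPEquiv.toMatrix}

/-- Homogeneous polynomials of degree `n` whose class in `Q_n` is invariant under every
element of `G` (the action on classes being induced by `substM`): for every `M ∈ G`,
`M·f - f` is hit. -/
def invPre (n : ℕ) (G : Set (Matrix (Fin 4) (Fin 4) kk)) : Submodule kk P4 :=
  homog n ⊓ ⨅ M ∈ G, (hitSub n).comap ((substM M).toLinearMap - LinearMap.id)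

/-- The subspace `(Q_n)^G` of `G`-invariant classes in `Q_n`. -/
def QInv (n : ℕ) (G : Set (Matrix (Fin 4) (Fin 4) kk)) : Submodule kk (Qn n) :=
  (invPre n G).map (Qmk n)

/-- The `Σ_4`-submodule of `Q_n` generated by the classes of the polynomials in `S`:
the span of the classes of all the permuted polynomials `σ · f`, `σ ∈ Σ_4`, `f ∈ S`. -/
def permSpan (n : ℕ) (S : Set P4) : Submodule kk (Qn n) :=
  Submodule.span kk
    {c | ∃ σ : Equiv.Perm (Fin 4), ∃ f ∈ S, c = Qmk n (rename (⇑σ) f)}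

/-- The weight vector of an exponent vector `d`: `wv d j = ∑ i (j-th binary digit of d i)`
(indexed from `j = 0`, so `wv d (j-1)` is `ω_j(x^d)` in the literature). -/
def wv (d : Fin 4 →₀ ℕ) (j : ℕ) : ℕ := ∑ i, d i / 2 ^ j % 2

/-- Strict left-lexicographic order on weight vectors. -/
def wLt (a b : ℕ → ℕ) : Prop := ∃ j, (∀ i, i < j → a i = b i) ∧ a j < b j

/-- Left-lexicographic order on weight vectors. -/
def wLe (a b : ℕ → ℕ) : Prop := a = b ∨ wLt a b

/-- `(P_4)_n^{ω}`: the span of the degree-`n` monomials of weight `≤ ω`. -/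
def Pw (n : ℕ) (w : ℕ → ℕ) : Submodule kk P4 :=
  Submodule.span kk
    {f | ∃ d : Fin 4 →₀ ℕ, (∑ i, d i) = n ∧ wLe (wv d) w ∧ f = monomial d 1}

/-- `(P_4)_n^{<ω}`: the span of the degree-`n` monomials of weight `< ω`. -/
def PwLt (n : ℕ) (w : ℕ → ℕ) : Submodule kk P4 :=
  Submodule.span kk
    {f | ∃ d : Fin 4 →₀ ℕ, (∑ i, d i) = n ∧ wLt (wv d) w ∧ f = monomial d 1}

/-- The denominator `(H_n ∩ (P_4)_n^{ω}) + (P_4)_n^{<ω}` of the weight subquotient. -/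
def wDenom (n : ℕ) (w : ℕ → ℕ) : Submodule kk P4 :=
  (hitSub n ⊓ Pw n w) ⊔ PwLt n w

/-- The weight subquotient `(Q_n)^{ω} = (P_4)_n^{ω} / ((H_n ∩ (P_4)_n^{ω}) + (P_4)_n^{<ω})`. -/
abbrev Qw (n : ℕ) (w : ℕ → ℕ) :=
  ↥(Pw n w) ⧸ ((wDenom n w).comap (Pw n w).subtype)

/-- The class `[f]_ω` in `(Q_n)^ω` of an element of `(P_4)_n^{ω}`. -/
def QwMk (n : ℕ) (w : ℕ → ℕ) : Pw n w →ₗ[kk] Qw n w :=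
  ((wDenom n w).comap (Pw n w).subtype).mkQ

/-- The subspace of `G`-invariant classes of `(Q_n)^{ω}` (the action being induced by
`substM`): the image of the subspace of those `f ∈ (P_4)_n^{ω}` with `M·f ≡_ω f`
for all `M ∈ G`. -/
def QwInv (n : ℕ) (w : ℕ → ℕ) (G : Set (Matrix (Fin 4) (Fin 4) kk)) :
    Submodule kk (Qw n w) :=
  Submodule.map (QwMk n w)
    (Submodule.comap (Pw n w).subtype
      (⨅ M ∈ G, (wDenom n w).comap ((substM M).toLinearMap - LinearMap.id)))

/-- The image in `(Q_n)^{ω}` of the span of a set `S ⊆ (P_4)_n^{ω}` of polynomials. -/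
def QwSpanOf (n : ℕ) (w : ℕ → ℕ) (S : Set P4) : Submodule kk (Qw n w) :=
  Submodule.map (QwMk n w) (Submodule.comap (Pw n w).subtype (Submodule.span kk S))

/-! ### Computable bookkeeping -/

abbrev E4 : Type := ℕ × ℕ × ℕ × ℕ

def fs (d : E4) : Fin 4 →₀ ℕ := Finsupp.equivFunOnFinite.symm ![d.1, d.2.1, d.2.2.1, d.2.2.2]

def mon (d : E4) : P4 := monomial (fs d) 1

theorem fs_inj {d e : E4} (h : fs d = fs e) : d = e := by
  have h' : ∀ i, fs d i = fs e i := fun i => by rw [h]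
  have h0 := h' 0
  have h1 := h' 1
  have h2 := h' 2
  have h3 := h' 3
  simp [fs] at h0 h1 h2 h3
  ext <;> assumption

theorem fs_surj (d : Fin 4 →₀ ℕ) : fs (d 0, d 1, d 2, d 3) = d := by
  ext i; fin_cases i <;> simp [fs]

theorem mon_eq (d : E4) : mon d = X 0 ^ d.1 * X 1 ^ d.2.1 * X 2 ^ d.2.2.1 * X 3 ^ d.2.2.2 := by
  have h : fs d = Finsupp.single 0 d.1 + Finsupp.single 1 d.2.1 + Finsupp.single 2 d.2.2.1 +
      Finsupp.single 3 d.2.2.2 := by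
    ext i; fin_cases i <;> simp [fs]
  simp only [mon, X_pow_eq_monomial, monomial_mul, mul_one, h]

def dg (d : E4) : ℕ := d.1 + d.2.1 + d.2.2.1 + d.2.2.2

theorem sum_fs (d : E4) : ∑ i, fs d i = dg d := by
  simp [Fin.sum_univ_four, fs, dg]

theorem mon_hom (d : E4) : (mon d).IsHomogeneous (dg d) := by
  apply isHomogeneous_monomial
  rw [Finsupp.degree_eq_sum, sum_fs]

def evL (l : List E4) : P4 := (l.map mon).sum

theorem evL_nil : evL [] = 0 := rfl
theorem evL_cons (d l) : evL (d :: l) = mon d + evL l := by simp [evL]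
theorem evL_append (l m) : evL (l ++ m) = evL l + evL m := by simp [evL]
theorem evL_flatMap {α : Type} (l : List α) (f : α → List E4) :
    evL (l.flatMap f) = (l.map fun a => evL (f a)).sum := by
  induction l with
  | nil => rfl
  | cons a l ih => simp [evL_append, ih]

def pas : ℕ → ℕ
  | 0 => 1
  | n + 1 => pas n ^^^ (pas n <<< 1)

theorem pas_bit (n : ℕ) : ∀ t, ((n.choose t : ℕ) : kk) = if (pas n).testBit t then 1 else 0 := by
  induction n with
  | zero =>
    intro t
    cases t with
    | zero => simp [pas]
    | succ t => simp [pas, Nat.testBit_succ]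
  | succ n ih =>
    intro t
    cases t with
    | zero =>
      have := ih 0
      simp only [pas, Nat.testBit_xor, Nat.testBit_shiftLeft]
      simpa using this
    | succ t =>
      rw [Nat.choose_succ_succ, Nat.cast_add, ih, ih]
      have hb : (pas (n + 1)).testBit (t + 1) = ((pas n).testBit (t + 1) ^^ (pas n).testBit t) := by
        simp only [pas, Nat.testBit_xor, Nat.testBit_shiftLeft]; simp
      rw [hb]
      have : (1 + 1 : kk) = 0 := by decide
      cases (pas n).testBit t <;> cases (pas n).testBit (t + 1) <;> simp [this]

def bin (n : ℕ) : List ℕ := (List.range (n + 1)).filter fun t => (pas n).testBit t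

theorem sum_list_range (f : ℕ → P4) (n : ℕ) :
    ((List.range n).map f).sum = ∑ i ∈ Finset.range n, f i := by
  induction n with
  | zero => simp
  | succ n ih => simp [List.range_succ, Finset.sum_range_succ, ih]

theorem sum_filter' {α : Type} (p : α → Bool) (f : α → P4) (l : List α) :
    ((l.filter p).map f).sum = (l.map fun t => if p t then f t else 0).sum := by
  induction l with
  | nil => rfl
  | cons a l ih => by_cases h : p a <;> simp [h, ih]

theorem add_pow_bin (x y : P4) (n : ℕ) :
    (x + y) ^ n = ((bin n).map fun t => x ^ (n - t) * y ^ t).sum := by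
  rw [add_comm, add_pow, bin, sum_filter', sum_list_range]
  refine Finset.sum_congr rfl fun t _ => ?_
  have h : ((n.choose t : ℕ) : P4) = C ((n.choose t : ℕ) : kk) := by simp
  rw [h, pas_bit]
  split_ifs <;> simp [mul_comm]

theorem sum_mul_sum' {α : Type} (l : List α) (f : α → P4) (q : P4) :
    (l.map f).sum * q = (l.map fun a => f a * q).sum := by
  induction l with
  | nil => simp
  | cons a l ih => simp [add_mul, ih]

theorem mul_sum' {α : Type} (l : List α) (f : α → P4) (q : P4) :
    q * (l.map f).sum = (l.map fun a => q * f a).sum := by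
  induction l with
  | nil => simp
  | cons a l ih => simp [mul_add, ih]

/-- Full expansion of the total square of a monomial. -/
def fullL (d : E4) : List E4 :=
  (bin d.2.2.2).flatMap fun l => (bin d.2.2.1).flatMap fun k => (bin d.2.1).flatMap fun j =>
    (bin d.1).map fun i => (d.1 + i, d.2.1 + j, d.2.2.1 + k, d.2.2.2 + l)

theorem bin_le {n t : ℕ} (h : t ∈ bin n) : t ≤ n := by
  have := (List.mem_filter.1 h).1
  have := List.mem_range.1 this
  omega

theorem sq_pow (i : Fin 4) (n : ℕ) :
    (X i + X i ^ 2 : P4) ^ n = ((bin n).map fun t => (X i : P4) ^ (n + t)).sum := by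
  rw [add_pow_bin]
  congr 1
  refine List.map_congr_left fun t ht => ?_
  have := bin_le ht
  rw [← pow_mul, ← pow_add]
  congr 1; omega

theorem sqTotal_mon (d : E4) : sqTotal (mon d) = evL (fullL d) := by
  rw [mon_eq]
  simp only [sqTotal, map_mul, map_pow, aeval_X, sq_pow]
  simp only [fullL, evL_flatMap]
  simp only [evL, List.map_map, Function.comp_def]
  simp only [mon_eq, sum_mul_sum', mul_sum', ]

theorem beq_false' {a b : ℕ} (h : a ≠ b) : Nat.beq a b = false := by
  cases h' : Nat.beq a b
  · rfl
  · exact absurd (Nat.eq_of_beq_eq_true h') h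

theorem comp_evL (n : ℕ) (l : List E4) :
    homogeneousComponent n (evL l) = evL (l.filter fun d => Nat.beq (dg d) n) := by
  induction l with
  | nil => simp [evL]
  | cons a l ih =>
    rw [evL_cons, map_add, ih]
    have h := homogeneousComponent_of_mem (n := dg a) (m := n)
      ((mem_homogeneousSubmodule _ _).2 (mon_hom a))
    rw [h]
    by_cases h2 : dg a = n
    · have hb : Nat.beq (dg a) n = true := by rw [h2]; exact Nat.beq_refl n
      rw [if_pos h2.symm, List.filter_cons, hb, if_pos rfl, evL_cons]
    · rw [if_neg (Ne.symm h2), List.filter_cons, beq_false' h2, zero_add]; rfl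

/-- The entries of `bin n` that are at most `r`. -/
def binr (n r : ℕ) : List ℕ := (bin n).filter fun t => Nat.ble t r

/-- The part of `fullL d` in degree `dg d + r`. -/
def sqR (d : E4) (r : ℕ) : List E4 :=
  (binr d.2.2.2 r).flatMap fun l => (binr d.2.2.1 (Nat.sub r l)).flatMap fun k =>
    (binr d.2.1 (Nat.sub (Nat.sub r l) k)).flatMap fun j =>
      ((binr d.1 (Nat.sub (Nat.sub (Nat.sub r l) k) j)).map fun i =>
        (Nat.add d.1 i, Nat.add d.2.1 j, Nat.add d.2.2.1 k, Nat.add d.2.2.2 l)).filter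
          fun e => Nat.beq (dg e) (dg d + r)

theorem flatMap_filter' {α β : Type} (l : List α) (q : α → Bool) (f : α → List β)
    (h : ∀ a, q a = false → f a = []) : (l.filter q).flatMap f = l.flatMap f := by
  induction l with
  | nil => rfl
  | cons a l ih =>
    cases hq : q a
    · simp [hq, ih, h a hq]
    · simp [hq, ih]

theorem filter_map_nil {α β : Type} (l : List α) (g : α → β) (p : β → Bool)
    (h : ∀ a, p (g a) = false) : (l.map g).filter p = [] := by
  induction l with
  | nil => rfl
  | cons a l ih => rw [List.map_cons, List.filter_cons, h a]; simpa using ih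

theorem filter_map_filter {α β : Type} (l : List α) (q : α → Bool) (g : α → β) (p : β → Bool)
    (h : ∀ a, q a = false → p (g a) = false) :
    ((l.filter q).map g).filter p = (l.map g).filter p := by
  induction l with
  | nil => rfl
  | cons a l ih =>
    cases hq : q a
    · simp only [List.filter_cons, hq, List.map_cons, h a hq]; simpa using ih
    · simp only [List.filter_cons, hq, List.map_cons, if_true, ih]

theorem flatMap_nil' {α β : Type} (l : List α) (f : α → List β) (h : ∀ a, f a = []) :
    l.flatMap f = [] := by
  induction l with
  | nil => rfl
  | cons a l ih => simp [h]

theorem ble_false {a b : ℕ} (h : Nat.ble a b = false) : b < a := by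
  by_contra h'
  have := Nat.ble_eq_true_of_le (not_lt.1 h')
  rw [h] at this; exact absurd this (by decide)

theorem sqR_eq (d : E4) (r : ℕ) :
    sqR d r = (fullL d).filter fun e => Nat.beq (dg e) (dg d + r) := by
  have hs : ∀ a b, Nat.sub a b = a - b := fun _ _ => rfl
  have ha : ∀ a b, Nat.add a b = a + b := fun _ _ => rfl
  simp only [sqR, fullL, binr, List.filter_flatMap, hs, ha]
  rw [flatMap_filter']
  · congr 1; funext l
    rw [flatMap_filter']
    · congr 1; funext k
      rw [flatMap_filter']
      · congr 1; funext j
        apply filter_map_filter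
        intro i hi
        have := ble_false hi
        apply beq_false'
        simp only [dg]; omega
      · intro j hj
        have := ble_false hj
        apply filter_map_nil
        intro i
        apply beq_false'
        simp only [dg]; omega
    · intro k hk
      have := ble_false hk
      apply flatMap_nil'; intro j
      apply filter_map_nil
      intro i
      apply beq_false'
      simp only [dg]; omega
  · intro l hl
    have := ble_false hl
    apply flatMap_nil'; intro k
    apply flatMap_nil'; intro j
    apply filter_map_nil
    intro i
    apply beq_false'
    simp only [dg]; omega

def sqL (d : E4) : List E4 := sqR d (Nat.sub 21 (dg d))

theorem sqL_eq (d : E4) (h : dg d < 21) : sqL d = (fullL d).filter fun e => Nat.beq (dg e) 21 := by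
  rw [sqL, sqR_eq]
  have : dg d + Nat.sub 21 (dg d) = 21 := by
    change dg d + (21 - dg d) = 21; omega
  rw [this]

theorem sqL_hit (d : E4) (h : dg d < 21) : evL (sqL d) ∈ hitSub 21 := by
  apply Submodule.subset_span
  refine ⟨dg d, h, mon d, mon_hom d, ?_⟩
  rw [sqTotal_mon, comp_evL, sqL_eq d h]

/-- Spikes are not seen by hit elements. -/
theorem mem_span_mon {n : ℕ} {g : P4} (hg : g ∈ homog n) :
    g ∈ Submodule.span kk {p | ∃ d : E4, dg d = n ∧ p = mon d} := by
  rw [g.as_sum]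
  refine Submodule.sum_mem _ fun d hd => ?_
  have h1 : monomial d (coeff d g) = coeff d g • (monomial d (1 : kk)) := by
    simp [smul_monomial]
  rw [h1]
  refine Submodule.smul_mem _ _ (Submodule.subset_span ⟨(d 0, d 1, d 2, d 3), ?_, ?_⟩)
  · have := ((mem_homogeneousSubmodule _ _).1 hg) (mem_support_iff.1 hd)
    rw [← this, ← sum_fs, fs_surj, ← Finsupp.degree_eq_sum, Finsupp.degree_eq_weight_one]
    rfl
  · rw [mon, fs_surj]

theorem coeff_mon (d e : E4) : coeff (fs e) (mon d) = if d = e then 1 else 0 := by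
  rw [mon, coeff_monomial]
  by_cases h : d = e
  · simp [h]
  · have : fs d ≠ fs e := fun h' => h (fs_inj h')
    simp [h, this]

theorem coeff_evL_zero (e : E4) (l : List E4) (h : e ∉ l) : coeff (fs e) (evL l) = 0 := by
  induction l with
  | nil => simp [evL]
  | cons a l ih =>
    simp only [List.mem_cons, not_or] at h
    rw [evL_cons, coeff_add, ih h.2, coeff_mon, if_neg (Ne.symm h.1), add_zero]

def spk (s : ℕ) : Prop := ∀ a < s + 1, ∀ t ∈ bin a, a + t = s → t = 0

theorem spike_hit (e : E4) (he : dg e = 21)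
    (h0 : spk e.1) (h1 : spk e.2.1) (h2 : spk e.2.2.1) (h3 : spk e.2.2.2)
    {p : P4} (hp : p ∈ hitSub 21) : coeff (fs e) p = 0 := by
  suffices hitSub 21 ≤ LinearMap.ker (lcoeff kk (fs e)) from this hp
  refine Submodule.span_le.2 ?_
  rintro _ ⟨n, hn, g, hg, rfl⟩
  change _ ∈ LinearMap.ker _
  have hg := mem_span_mon hg
  suffices Submodule.span kk {p | ∃ d : E4, dg d = n ∧ p = mon d} ≤
      LinearMap.ker ((lcoeff kk (fs e)) ∘ₗ (homogeneousComponent 21) ∘ₗ sqTotal.toLinearMap) from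
    this hg
  refine Submodule.span_le.2 ?_
  rintro _ ⟨d, hd, rfl⟩
  change coeff (fs e) (homogeneousComponent 21 (sqTotal (mon d))) = 0
  rw [sqTotal_mon, comp_evL]
  apply coeff_evL_zero
  intro hm
  have hm := (List.mem_filter.1 hm).1
  simp only [fullL, List.mem_flatMap, List.mem_map] at hm
  obtain ⟨l, hl, k, hk, j, hj, i, hi, rfl⟩ := hm
  have a0 := h0 d.1 (by simp) i hi rfl
  have a1 := h1 d.2.1 (by simp) j hj rfl
  have a2 := h2 d.2.2.1 (by simp) k hk rfl
  have a3 := h3 d.2.2.2 (by simp) l hl rfl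
  subst a0 a1 a2 a3
  simp only [dg] at he hd
  omega

instance (s : ℕ) : Decidable (spk s) := by unfold spk; infer_instance

theorem spk0 : spk 0 := by decide +kernel
theorem spk3 : spk 3 := by decide +kernel
theorem spk7 : spk 7 := by decide +kernel
theorem spk15 : spk 15 := by decide +kernel

/-! ### Weight systems and masks -/

structure WS where
  N : ℕ
  expo : ℕ → E4
  code : E4 → ℕ
  low : E4 → Bool

def par (d : E4) : E4 := (d.1 % 2, d.2.1 % 2, d.2.2.1 % 2, d.2.2.2 % 2)
def half (d : E4) : E4 := (d.1 / 2, d.2.1 / 2, d.2.2.1 / 2, d.2.2.2 / 2)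

/-- Index of the first even entry. -/
def z3 (d : E4) : ℕ :=
  if d.1 % 2 == 0 then 0 else if d.2.1 % 2 == 0 then 1 else if d.2.2.1 % 2 == 0 then 2 else 3

/-- Index of the first odd entry. -/
def o1 (d : E4) : ℕ :=
  if d.1 % 2 == 1 then 0 else if d.2.1 % 2 == 1 then 1 else if d.2.2.1 % 2 == 1 then 2 else 3

/-- Exponents of the variable of index `i`. -/
def dl (i : ℕ) : E4 :=
  (if i == 0 then 1 else 0, if i == 1 then 1 else 0, if i == 2 then 1 else 0,
    if i == 3 then 1 else 0)

/-- Exponents of the product of the variables of index different from `i`. -/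
def xi (i : ℕ) : E4 :=
  (if i == 0 then 0 else 1, if i == 1 then 0 else 1, if i == 2 then 0 else 1,
    if i == 3 then 0 else 1)

def cmb (d e : E4) : E4 :=
  (d.1 + 2 * e.1, d.2.1 + 2 * e.2.1, d.2.2.1 + 2 * e.2.2.1, d.2.2.2 + 2 * e.2.2.2)

def W1 : WS where
  N := 256
  expo n := cmb (xi (n % 4)) (cmb (xi (n / 4 % 4)) (cmb (dl (n / 16 % 4)) (dl (n / 64 % 4))))
  code d := z3 d + 4 * z3 (half d) + 16 * o1 (half (half d)) + 64 * o1 (half (half (half d)))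
  low d := Nat.blt (dg (par d)) 3 || Nat.blt (dg (par (half d))) 3

def W2 : WS where
  N := 64
  expo n := cmb (xi (n % 4)) (cmb (xi (n / 4 % 4)) (xi (n / 16 % 4)))
  code d := z3 d + 4 * z3 (half d) + 16 * z3 (half (half d))
  low d := Nat.blt (dg (par d)) 3 || Nat.blt (dg (par (half d))) 3 ||
    Nat.blt (dg (par (half (half d)))) 3

def Phi (W : WS) (m : ℕ) : P4 := ∑ n ∈ Finset.range W.N, if m.testBit n then mon (W.expo n) else 0

theorem two0 (p : P4) : p + p = 0 := CharTwo.add_self_eq_zero p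

theorem Phi_zero (W : WS) : Phi W 0 = 0 := by simp [Phi]

theorem Phi_xor (W : WS) (a b : ℕ) : Phi W (a ^^^ b) = Phi W a + Phi W b := by
  simp only [Phi, ← Finset.sum_add_distrib, Nat.testBit_xor]
  refine Finset.sum_congr rfl fun n _ => ?_
  cases a.testBit n <;> cases b.testBit n <;> simp [two0]

theorem Phi_pow (W : WS) {n : ℕ} (h : n < W.N) : Phi W (2 ^ n) = mon (W.expo n) := by
  rw [Phi, Finset.sum_eq_single n]
  · simp
  · intro b _ hb
    rw [Nat.testBit_two_pow_of_ne (Ne.symm hb)]; simp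
  · intro h'; exact absurd (Finset.mem_range.2 h) h'

def maskL (W : WS) (l : List E4) : ℕ :=
  l.foldr (fun d m => if W.low d then m else 2 ^ W.code d ^^^ m) 0

def eqE (d e : E4) : Bool :=
  Nat.beq d.1 e.1 && Nat.beq d.2.1 e.2.1 && Nat.beq d.2.2.1 e.2.2.1 && Nat.beq d.2.2.2 e.2.2.2

theorem eqE_eq {d e : E4} (h : eqE d e = true) : d = e := by
  simp only [eqE, Bool.and_eq_true, Nat.beq_eq] at h
  obtain ⟨⟨⟨h0, h1⟩, h2⟩, h3⟩ := h
  ext <;> assumption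

def okL (W : WS) (l : List E4) : Bool :=
  l.all fun d => Nat.beq (dg d) 21 && (W.low d || (eqE (W.expo (W.code d)) d && Nat.blt (W.code d) W.N))

theorem ok_mem (W : WS) (S : Submodule kk P4)
    (hS : ∀ d, dg d = 21 → W.low d = true → mon d ∈ S) (l : List E4) (h : okL W l = true) :
    evL l + Phi W (maskL W l) ∈ S := by
  induction l with
  | nil => simp [evL, maskL, Phi_zero]
  | cons d l ih =>
    simp only [okL, List.all_cons, Bool.and_eq_true, Nat.beq_eq] at h
    obtain ⟨⟨h1, h2⟩, h3⟩ := h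
    have ih := ih h3
    rw [evL_cons]
    by_cases hl : W.low d = true
    · have : maskL W (d :: l) = maskL W l := by simp [maskL, hl]
      rw [this, add_assoc]
      exact S.add_mem (hS d h1 hl) ih
    · have hm : maskL W (d :: l) = 2 ^ W.code d ^^^ maskL W l := by simp [maskL, hl]
      simp only [hl, Bool.or_eq_true, Bool.and_eq_true, Bool.false_eq_true, false_or, Nat.blt_eq] at h2
      rw [hm, Phi_xor, Phi_pow W h2.2, eqE_eq h2.1]
      have : mon d + evL l + (mon d + Phi W (maskL W l))
        = (mon d + mon d) + (evL l + Phi W (maskL W l)) := by ring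
      rw [this, two0, zero_add]
      exact ih

/-- Binary digit, in a form which evaluates fast. -/
def tb (v p : ℕ) : Bool := Nat.beq (Nat.land (Nat.shiftRight v p) 1) 1

def red (R : List (ℕ × ℕ)) (v : ℕ) : ℕ :=
  R.foldl (fun v r => cond (tb v r.2) (Nat.xor v r.1) v) v

theorem red_mem (W : WS) (S : Submodule kk P4) (R : List (ℕ × ℕ)) (hR : ∀ r ∈ R, Phi W r.1 ∈ S) :
    ∀ v, Phi W v + Phi W (red R v) ∈ S := by
  induction R with
  | nil => intro v; simp [red, two0]
  | cons r R ih =>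
    intro v
    have ih := ih (fun r hr => hR r (List.mem_cons_of_mem _ hr))
    have hr := hR r List.mem_cons_self
    by_cases h : tb v r.2 = true
    · have e : red (r :: R) v = red R (v ^^^ r.1) := by simp [red, h]
      rw [e]
      have := S.add_mem (ih (v ^^^ r.1)) hr
      rw [Phi_xor] at this
      have e2 : Phi W v + Phi W r.1 + Phi W (red R (v ^^^ r.1)) + Phi W r.1
        = Phi W v + Phi W (red R (v ^^^ r.1)) + (Phi W r.1 + Phi W r.1) := by ring
      rw [e2, two0, add_zero] at this
      exact this
    · have e : red (r :: R) v = red R v := by simp [red, h]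
      rw [e]; exact ih v

theorem red_zero (W : WS) (S : Submodule kk P4) (R : List (ℕ × ℕ)) (hR : ∀ r ∈ R, Phi W r.1 ∈ S)
    {v : ℕ} (h : red R v = 0) : Phi W v ∈ S := by
  have := red_mem W S R hR v
  rwa [h, Phi_zero, add_zero] at this

/-- Check of a list of relations (monomial, mask, pivot). -/
def relsOK (W : WS) (R : List (E4 × ℕ × ℕ)) : Bool :=
  R.all fun r => Nat.blt (dg r.1) 21 && okL W (sqL r.1) && Nat.beq (maskL W (sqL r.1)) r.2.1

theorem rels_mem (W : WS) (S : Submodule kk P4)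
    (hS : ∀ d, dg d = 21 → W.low d = true → mon d ∈ S) (hH : hitSub 21 ≤ S)
    (R : List (E4 × ℕ × ℕ)) (h : relsOK W R = true) :
    ∀ r ∈ R.map Prod.snd, Phi W r.1 ∈ S := by
  intro r hr
  obtain ⟨q, hq, rfl⟩ := List.mem_map.1 hr
  have := List.all_eq_true.1 h q hq
  simp only [Bool.and_eq_true, Nat.blt_eq, Nat.beq_eq] at this
  obtain ⟨⟨h1, h2⟩, h3⟩ := this
  have a := ok_mem W S hS _ h2
  rw [h3] at a
  have b := hH (sqL_hit _ h1)
  exact (S.add_mem_iff_right b).1 a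

def b2z (b : Bool) : kk := if b then 1 else 0

theorem b2z_and (a b : Bool) : b2z (a && b) = b2z a * b2z b := by cases a <;> cases b <;> rfl
theorem b2z_xor (a b : Bool) : b2z (a ^^ b) = b2z a + b2z b := by cases a <;> cases b <;> rfl

abbrev G5 : Type := ℕ × ℕ × ℕ × ℕ × ℕ

def gsum (F : G5 → ℕ → Bool) (G : List G5) (n : ℕ) : ℕ :=
  G.foldr (fun e m => cond (F e n) (Nat.xor e.2.2.2.2 m) m) 0

theorem Phi_gsum (W : WS) (F : G5 → ℕ → Bool) (G : List G5) (n : ℕ) :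
    Phi W (gsum F G n) = (G.map fun e => b2z (F e n) • Phi W e.2.2.2.2).sum := by
  induction G with
  | nil => simp [gsum, Phi_zero]
  | cons e G ih =>
    by_cases h : F e n = true
    · have : gsum F (e :: G) n = e.2.2.2.2 ^^^ gsum F G n := by simp [gsum, h]
      rw [this, Phi_xor, ih]; simp [h, b2z]
    · have : gsum F (e :: G) n = gsum F G n := by simp [gsum, h]
      rw [this, ih]; simp [h, b2z]

theorem core_sum (W : WS) (F : G5 → ℕ → Bool) (G : List G5) (c : ℕ → kk)
    (h0 : ∀ e ∈ G, ∑ n ∈ Finset.range W.N, c n * b2z (F e n) = 0) :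
    ∑ n ∈ Finset.range W.N, c n • Phi W (gsum F G n) = 0 := by
  simp only [Phi_gsum]
  induction G with
  | nil => simp
  | cons e G ih =>
    simp only [List.map_cons, List.sum_cons, smul_add, Finset.sum_add_distrib]
    rw [ih fun e he => h0 e (List.mem_cons_of_mem _ he), add_zero]
    simp only [smul_smul]
    rw [← Finset.sum_smul, h0 e List.mem_cons_self, zero_smul]

theorem core (W : WS) (S : Submodule kk P4) (F : G5 → ℕ → Bool) (G : List G5) (c : ℕ → kk)
    (hr : ∀ n < W.N, Phi W (2 ^ n ^^^ gsum F G n) ∈ S)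
    (h0 : ∀ e ∈ G, ∑ n ∈ Finset.range W.N, c n * b2z (F e n) = 0) :
    ∑ n ∈ Finset.range W.N, c n • mon (W.expo n) ∈ S := by
  have h := core_sum W F G c h0
  rw [← add_zero (∑ n ∈ Finset.range W.N, c n • mon (W.expo n)), ← h, ← Finset.sum_add_distrib]
  refine S.sum_mem fun n hn => ?_
  have hn := Finset.mem_range.1 hn
  rw [← smul_add, ← Phi_pow W hn, ← Phi_xor]
  exact S.smul_mem _ (hr n hn)

def R1 : List (E4 × ℕ × ℕ) :=
  [((1, 1, 3, 15), 31803247166010917932499355013372533284894710143761141246188911623267155968, 241),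
   ((1, 1, 7, 11), 485279040008711516304006271566353352125468599605730304659864984485888, 228),
   ((1, 1, 11, 7), 1724057483474124965653140405544097831571081512456552448, 180),
   ((1, 1, 15, 3), 26307029471956252527666326988893094353806785773568, 161),
   ((1, 3, 1, 15), 459380236842379925691657350193158814115145813187660929111617612336081141760, 242),
   ((1, 3, 3, 13), 7251140353850489288609852943048937588955993912777540204131071850104911560704, 243),
   ((1, 3, 7, 9), 110643621121986225717313429917128564284606840710106509462449216462782464, 236),
   ((1, 3, 9, 7), 24903052539070693948323139191192524233804510735483535360, 184),
   ((1, 3, 13, 3), 379990425706034758732958056506233585110542461173760, 162),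
   ((1, 3, 15, 1), 5998002719606025576307922553467625512667947156373504, 163),
   ((1, 7, 1, 11), 106957796225878392740072996866227782823877831266182691117659586560, 216),
   ((1, 7, 3, 9), 1688287675811557399250998381303841618112286998140052939795672858624, 220),
   ((1, 7, 9, 3), 5798193751617962016799286750888573991554908160, 152),
   ((1, 7, 11, 1), 91522258294769677372862587790948875620543627264, 156),
   ((1, 9, 3, 7), 93461343453626897313548933925961728, 116),
   ((1, 9, 7, 3), 1426106925256758076683791106048, 100),
   ((1, 11, 1, 7), 1349997183219055183417929045597224960, 120),
   ((1, 11, 7, 1), 325152378958540841483904372178944, 108), ((1, 13, 3, 3), 21760664753063325144711168, 81),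
   ((1, 15, 1, 3), 314320713099803585423605760, 82), ((1, 15, 3, 1), 4961431563698438132994146304, 83),
   ((3, 1, 1, 15), 1017703909312349373839979360427921065116630724600356519878045171944548990976, 246),
   ((3, 1, 3, 13), 14700167578956157622133035206181082051684666022005149731571763594754596536320, 247),
   ((3, 1, 7, 9), 224306756270693323091629565524003327204661041595537563042782037273477120, 237),
   ((3, 1, 9, 7), 55169839471171998900900492977411130610274608398609678336, 185),
   ((3, 1, 13, 3), 841824943102600080885322463644579019321817144754176, 166),
   ((3, 1, 15, 1), 12159693622593112279454657808199474723537358757560320, 167),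
   ((3, 3, 1, 13), 32566525097995179962879339533693474083732183187211408636097445502225567711232, 251),
   ((3, 3, 5, 9), 496925736968920592695302422083945832576479845996267831971701744113549312, 238),
   ((3, 3, 13, 1), 26938398179283202588330318836626528618298148632133632, 174),
   ((3, 5, 1, 11), 236952656254253670070315562288258472717513964651235500322199699456, 217),
   ((3, 5, 3, 9), 3422649479228108567682335899719289050364090600517846115765106769920, 221),
   ((3, 5, 9, 3), 12845229234353638929524573725045456227444719616, 153),
   ((3, 5, 11, 1), 185542200051774784537577176028434367729757061120, 157),
   ((3, 7, 1, 9), 7582485000136117442250097993224271126960446868839536010310390382592, 222),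
   ((3, 7, 9, 1), 411047335499316445744786359201454599278231027712, 158),
   ((3, 9, 1, 7), 2990762990516060714033565885630775296, 121),
   ((3, 9, 7, 1), 659178312118679288778285666795520, 109),
   ((3, 11, 5, 1), 1460333491462920270524202092593152, 110), ((3, 13, 1, 3), 696341272098026404630757376, 89),
   ((3, 13, 3, 1), 10058262819193714733555384320, 93), ((3, 15, 1, 1), 22282920707136844948184236032, 91),
   ((5, 1, 3, 11), 112987831236960253749044209617737995489842398000352621232128, 196),
   ((5, 1, 11, 3), 6125082604576892342340742933771827806208, 132),
   ((5, 3, 1, 11), 1632046451200536998597305250033993268186612415560648973352960, 200),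
   ((5, 3, 3, 9), 25761225522026937854782079792844262971684066744080397640925184, 204),
   ((5, 3, 9, 3), 88473415399444000500477397932259734978560, 136),
   ((5, 3, 11, 1), 1396518833843531454053689388899976739815424, 140),
   ((5, 9, 3, 3), 332041393326771929088, 68), ((5, 11, 1, 3), 4796153459164483420160, 72),
   ((5, 11, 3, 1), 75705437678503999832064, 76),
   ((7, 1, 1, 11), 3615610599582728119969414707767615855674956736011283879428096, 201),
   ((7, 1, 3, 9), 52225486438417183955113768001087784581971597297940767147294720, 205),
   ((7, 1, 9, 3), 196002643346460554954903773880698489798656, 137),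
   ((7, 1, 11, 1), 2831149292782208016015276733832311519313920, 141),
   ((7, 3, 1, 9), 115699539186647299839021270648563707381598615552361084141699072, 206),
   ((7, 3, 9, 1), 6272084587086737758556920764182351673556992, 142),
   ((7, 9, 1, 3), 10625324586456701730816, 73), ((7, 9, 3, 1), 153476910693263469445120, 77),
   ((7, 11, 1, 1), 340010386766614455386112, 78), ((9, 1, 3, 7), 5066549580791808, 52),
   ((9, 1, 7, 3), 77309411328, 36), ((9, 3, 1, 7), 73183493944770560, 56), ((9, 3, 7, 1), 17626545782784, 44),
   ((9, 7, 1, 3), 17039360, 24), ((9, 7, 3, 1), 268959744, 28), ((11, 1, 1, 7), 162129586585337856, 57),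
   ((11, 1, 7, 1), 35734127902720, 45), ((11, 3, 5, 1), 79164837199872, 46), ((11, 5, 1, 3), 37748736, 25),
   ((11, 5, 3, 1), 545259520, 29), ((11, 7, 1, 1), 1207959552, 30), ((13, 1, 3, 3), 18, 4),
   ((13, 3, 1, 3), 260, 8), ((13, 3, 3, 1), 4104, 12), ((15, 1, 1, 3), 576, 6), ((15, 1, 3, 1), 8320, 7),
   ((15, 3, 1, 1), 18432, 11),
   ((0, 3, 7, 7), 26959946667150735575638319205073278070326341316864548652298746724352, 176),
   ((0, 7, 3, 7), 411376139330301510538742295644529923104218794036925462166372352, 112),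
   ((0, 7, 7, 3), 22300745198530702369698232536985955049930752, 96),
   ((1, 2, 7, 7), 53919893334301471151276638410146556140652682633729097304597493448704, 177),
   ((1, 3, 6, 7), 107839786668602942302553276820293112281305365267458194609194986897408, 178),
   ((1, 3, 5, 11), 7009586133459166346613423922625103975145657549860548845086938664796160, 226),
   ((1, 3, 7, 6), 215679573337205884605106553640586224562610730534916389218389973794816, 227),
   ((1, 3, 11, 5), 393085106232100492168916012464054305598206584840093958144, 179),
   ((1, 6, 3, 7), 822752278660603021077484591289059846208437588073850924332744704, 113),
   ((1, 5, 3, 11), 7404770507945427189697361321508077272422311395351109385068740608, 209),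
   ((1, 6, 7, 3), 44601490397061404739396465073971910099861504, 97),
   ((1, 5, 11, 3), 401413413573551216547642928907670507107647488, 145),
   ((1, 7, 2, 7), 1645504557321206042154969182578119692416875176147701848665489408, 114),
   ((1, 7, 3, 6), 3291009114642412084309938365156239384833750352295403697330978816, 211),
   ((1, 11, 3, 5), 21309186307426932587489156935119273984, 115),
   ((1, 7, 6, 3), 89202980794122809478792930147943820199723008, 146),
   ((1, 11, 5, 3), 20599322253708727774321427087360, 98),
   ((1, 7, 7, 2), 178405961588245618957585860295887640399446016, 99),
   ((3, 0, 7, 7), 862718293348823538420426214562344898250442922139665556873559895179264, 181),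
   ((3, 1, 6, 7), 1725436586697647076840852429124689796500885844279331113747119790358528, 182),
   ((3, 1, 5, 11), 15528929280278768521728200690123307268014995187383369749115679503548416, 230),
   ((3, 1, 7, 6), 3450873173395294153681704858249379593001771688558662227494239580717056, 231),
   ((3, 1, 11, 5), 796897681250262206346340454118160775481744343535473131520, 183),
   ((3, 3, 4, 7), 27606985387162353229453638865995036744014173508469297819953916645736448, 186),
   ((3, 3, 7, 4), 883423532389195303342516443711841175808453552271017530238525332663566336, 239),
   ((3, 4, 3, 7), 13164036458569648337239753460624957539335001409181614789323915264, 117),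
   ((3, 4, 7, 3), 713623846352982475830343441183550561597784064, 101),
   ((3, 5, 2, 7), 26328072917139296674479506921249915078670002818363229578647830528, 118),
   ((3, 5, 7, 2), 2854495385411929903321373764734202246391136256, 103),
   ((3, 7, 0, 7), 421249166674228746791672110739998641258720045093811673258365288448, 122),
   ((3, 7, 1, 6), 842498333348457493583344221479997282517440090187623346516730576896, 219),
   ((3, 11, 1, 5), 95704415696513942849074108340184809472, 123),
   ((3, 7, 3, 4), 13479973333575319897333507543679956520279041443001973544267689230336, 223),
   ((3, 7, 4, 3), 22835963083295439226570990117873617971129090048, 154),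
   ((3, 7, 5, 2), 45671926166590878453141980235747235942258180096, 155),
   ((3, 7, 7, 0), 730750818665454055250271683771955775076130881536, 111),
   ((4, 3, 3, 7), 6277101735386680763835789423207666416102355725939011223552, 48),
   ((4, 3, 7, 3), 340282366920938463463374607436063178752, 32), ((4, 7, 3, 3), 18446744073709617152, 16),
   ((5, 2, 3, 7), 12554203470773361527671578846415332832204711451878022447104, 49),
   ((5, 2, 7, 3), 680564733841876926926749214872126357504, 33),
   ((5, 3, 2, 7), 25108406941546723055343157692830665664409422903756044894208, 50),
   ((5, 3, 7, 2), 2722258935367507707706996859488505430016, 35), ((5, 7, 2, 3), 73786976294838468608, 18),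
   ((5, 7, 3, 2), 147573952589676937216, 19),
   ((7, 0, 3, 7), 200867255532373784442745261542645325315275383230048359153664, 53),
   ((7, 0, 7, 3), 10889035741470030830827987437954021720064, 37),
   ((7, 1, 2, 7), 401734511064747568885490523085290650630550766460096718307328, 54),
   ((7, 1, 3, 6), 803469022129495137770981046170581301261101532920193436614656, 199),
   ((11, 1, 3, 5), 2341871806232657920, 55), ((7, 1, 6, 3), 21778071482940061661655974875908043440128, 134),
   ((11, 1, 5, 3), 2473901162496, 38), ((7, 1, 7, 2), 43556142965880123323311949751816086880256, 39),
   ((7, 3, 0, 7), 6427752177035961102167848369364650410088812263361547492917248, 58),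
   ((7, 3, 1, 6), 12855504354071922204335696738729300820177624526723094985834496, 203),
   ((11, 3, 1, 5), 5188146770730811392, 59),
   ((7, 3, 3, 4), 205688069665150755269371147819668813122841992427569519773351936, 207),
   ((7, 3, 4, 3), 348449143727040986586495598014528695042048, 138),
   ((7, 3, 5, 2), 696898287454081973172991196029057390084096, 139),
   ((7, 3, 7, 0), 11150372599265311570767859136464918241345536, 47), ((7, 4, 3, 3), 590295810358707748864, 69),
   ((7, 5, 2, 3), 1180591620717415497728, 70), ((7, 5, 3, 2), 2361183241434830995456, 71),
   ((7, 7, 0, 3), 18889465931478647963648, 26), ((7, 7, 1, 2), 37778931862957295927296, 27),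
   ((7, 7, 3, 0), 604462909807316734836736, 31),
   ((2, 3, 3, 11), 7237012479085191029043360557354157158420845317939104782417543926936223350784, 212),
   ((3, 3, 3, 11), 57896072225656648916776313627091323552033050364503699004302436737424283402240, 192),
   ((2, 3, 11, 3), 392319232606443516714342755984999361330587228413597057024, 148),
   ((3, 3, 11, 3), 3138552364271730632949118299038569515973089204906900848640, 128),
   ((2, 11, 3, 3), 21267668214987600449691915052241649664, 84),
   ((3, 11, 3, 3), 170141264590146331983043411712189399040, 64),
   ((3, 2, 3, 11), 14474024958170382058086721114708314316841690635878209564835087853872446701568, 193),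
   ((3, 2, 11, 3), 784638465212887033428685511969998722661174456827194114048, 129),
   ((3, 3, 2, 11), 28948049916340764116173442229416628633683381271756419129670175707744893403136, 194),
   ((3, 3, 3, 10), 57896099832681528232346884458833257267366762543512838259340351415489786806272, 255),
   ((3, 3, 5, 6), 55213970774324706458907277731990073488028347016938595639907833291472896, 235),
   ((3, 3, 9, 5), 1765434863077503964828815775277156179528787468755509706752, 187),
   ((3, 5, 3, 6), 52656145834278593348959013842499830157340005636726459157295661056, 215),
   ((3, 9, 3, 5), 43199909863009765869373729459111198720, 119),
   ((5, 3, 3, 6), 50216813883093446110686315385661331328818845807512089788416, 195),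
   ((9, 3, 3, 5), 1155173304420532224, 51),
   ((3, 3, 10, 3), 1569276930425774066857371023939997445322348913654388228096, 170),
   ((3, 5, 6, 3), 1427247692705964951660686882367101123195568128, 150),
   ((3, 9, 5, 3), 45635421608216258453881315393536, 102),
   ((5, 3, 6, 3), 1361129467683753853853498429744252715008, 130), ((9, 3, 5, 3), 1116691496960, 34),
   ((3, 3, 11, 2), 3138553860851548133714742047879994890644697827308776456192, 131),
   ((3, 10, 3, 3), 42535336429975200899383830104483299328, 85), ((5, 6, 3, 3), 36893488147419234304, 65),
   ((9, 5, 3, 3), 1179648, 17), ((3, 11, 2, 3), 85070672859950401798767660208966598656, 66),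
   ((3, 11, 3, 2), 170141345719900803597535320417933197312, 67), ((10, 3, 3, 3), 1152922604119523329, 20),
   ((11, 3, 3, 3), 9223376434903384065, 0), ((11, 2, 3, 3), 2305845208239046658, 1),
   ((11, 3, 2, 3), 4611690416478093316, 2), ((11, 3, 3, 2), 9223380832956186632, 3)]

def G1 : List (G5) :=
  [(33825, 33825, 8, 1, 43422033463993573289331586389876675561248225778316127663291293844016149356544),
   (33810, 33810, 8, 2, 43422033463993573288939267532145926043972842447326433640840960539060380631040),
   (33811, 33842, 8, 3, 43422033463993573283839122371413318698963167801817725458028340920449914372096),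
   (33090, 33300, 8, 4, 65133050195990359926151063776000182210498588485030932538961477825343120211968),
   (33091, 33364, 8, 5, 5492464018463356862285057976498402205260647098149207277568),
   (33106, 34324, 8, 6, 21711016731996786645450432409170273130653378691988458107217496331587124461568),
   (33107, 34388, 8, 7, 0),
   (16920, 6210, 1, 2, 65133050196031908915831041390677225749030903051726714181083489459749846515712),
   (16680, 6180, 1, 4, 41491357920749542480420821988892467909067805759408715422715844052910080),
   (16696, 6244, 1, 6, 1569277304572534800453234615783156468379317529065692332032),
   (5160, 5160, 1, 8, 51141415977890782506143300456381549943379941528945732268374953998967407378432),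
   (5176, 5288, 1, 10, 65133050196031908917400314953798031330580633901531369112358180538619493613568),
   (5416, 7208, 1, 12, 41491357920748757832577152894400608975117070057800005020571246195113984),
   (17025, 10305, 2, 1, 72370055773362114851709343417433098110897262760423824367165677435843151667744),
   (16770, 10260, 2, 4, 35425369920641825489227745653568644953131259971499061266513058842279936),
   (16771, 10324, 2, 5, 5238025436367633002489624059531525244234874746830848),
   (5250, 9240, 2, 8, 51648522626477509583607699009146814154869976969090993046677254961443559702528),
   (5251, 9368, 2, 9, 101318078082691163707602087424734991960270932918356172449073471476175921479680),
   (5506, 11288, 2, 12, 35425369920639471559918612832273452336709762083577369815107654886883328),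
   (16921, 14402, 3, 3, 39492109375708945015287379655676648252438690318686005319931265024),
   (16682, 14372, 3, 4, 48366144320873347939435022418151952836544160848902197960031892546781184),
   (16699, 14436, 3, 7, 72370055773322622139731868623588863781214681837439354849847108069873174970368),
   (5162, 13352, 3, 8, 79635365466356129832441954241860417874141924486959213837424904173510090293248),
   (5179, 13480, 3, 11, 101318078082691163105000320827613638632035148290420196503249654650637821935616),
   (5418, 15400, 3, 12, 48366144320872563299075703409138354533733492364698857400467945810821120),
   (18465, 18465, 4, 1, 28948063719807136430331438136706683436879521564193934988300808804658982176256),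
   (18450, 18450, 4, 2, 50659073550480464123432071869060540752485870068474093936093646256273681809408),
   (18451, 18482, 4, 3, 101318078082651670995624616372334949252145001588109111518007202370171837612032),
   (6210, 16920, 4, 8, 68299247038268801008571112973691098065221127937927274111918815261954251161600),
   (6211, 17048, 4, 9, 41410478087574438688143090514906450554512396810345712255099149328842752),
   (6226, 18968, 4, 10, 50659073550480464121862793067914098151041528457936198622377587958708571209728),
   (16922, 22594, 5, 2, 65133084704750067457621354048451660003401195198158759478581739137158627721216),
   (16681, 22564, 5, 5, 41410478080744952005280403712047067721188415924532626648218385103454208),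
   (16697, 22628, 5, 7, 72370055773322622139731868623585295661982917181125624378743529419399233536000),
   (5164, 21544, 5, 8, 94533392255650667465145858120547129517318187643170334143154598804886212575232),
   (5180, 21672, 5, 10, 65133084704750067456052076743882894028971583011675647135407429543287492444160),
   (5421, 23592, 5, 13, 41410478080744952000042381843853111662062455749626344919836261351424000),
   (17057, 26689, 6, 1, 72370069576841644195511093106230230295022968413038470900613029648624124953088),
   (16786, 26644, 6, 6, 34508731733952818940541079083795527585837399534637552193960978340118528),
   (16787, 26708, 6, 7, 72370055773322622139731867127007619035138328697163440433449672199959247585280),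
   (5314, 25624, 6, 8, 102222738288549938128493983875355844113291641034273238527608902402485642067968),
   (5315, 25752, 6, 9, 101318091886170693051403837113535692318073582178023812279715522956548718460928),
   (5586, 27672, 6, 14, 34508731733954388212607625981576086209611346777455958364673737127624704),
   (16923, 30786, 7, 3, 34508758062027305351904300461083007127259991397808364298135712389136384),
   (16683, 30756, 7, 5, 48312224427535515788225426544443559408674416175354771721910517539799040),
   (16698, 30820, 7, 6, 1569277304568765974514682697083321688171194868604166209536),
   (5183, 29864, 7, 11, 101318112591409733022929963786902380454618363801861994764350028859539189661696),
   (5423, 31784, 7, 13, 48312224427535515787477137706130137114513564721796731474998785575223296),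
   (16924, 38978, 9, 2, 5100145160004711022027382014906260285329678908319256805376),
   (16684, 38948, 9, 4, 65133050195990359926151006905314853882424629895450345632701853780930109374464),
   (16700, 39012, 9, 6, 65133050195990359929289548793544988998660407083376683203849057727385348079616),
   (5161, 37928, 9, 9, 101318078082651671001117075901065265040265299398798022804145399802332815818752),
   (5177, 38056, 9, 11, 101318078082651670995624611882601919371908983653491314690071979689491281477632),
   (5417, 39976, 9, 13, 5492464018463345668356315745306708114089561013906030198784),
   (17089, 43073, 10, 1, 784637716926189634463563859408470247703781513569647992832),
   (16834, 43028, 10, 4, 72370055773322622144832025756208386840912344693994391825805754055430466699264),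
   (16835, 43092, 10, 5, 72370055773322622140516506340511485296403945460715088124883786656234816405504),
   (5266, 42008, 10, 10, 36185027886661311073396802541369979133847037054432105929334826823968125616128),
   (5267, 42136, 10, 11, 14474011154664524427946373126085988481701283379070187812867425669927325925376),
   (5522, 44056, 10, 14, 5100145160001678120616578906356228963083163798627028041728),
   (16925, 47170, 11, 3, 5100145160004532616044526121983617585459895287363126951936),
   (16703, 47204, 11, 7, 72370055773322622144832013783589828277984907723290235462642206273037509066752),
   (5163, 46120, 11, 9, 14474011154664524433831156003011001697797335963327375077961078056103144587264),
   (5178, 46248, 11, 10, 65133050195990359927327954501233618358465849026089851184153401691496115077120),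
   (5419, 48168, 11, 13, 5884782876925013216096052584257187265095958229185032355840),
   (19489, 51233, 12, 1, 101318078082651670997193890309603942816344431173373459024368267244829027614720),
   (19474, 51218, 12, 2, 94081072505319408783220703746560948575621395209194247253142757981745712201728),
   (19475, 51250, 12, 3, 28948022309329048855892749245327330217091743401546189895674770858535764885504),
   (6466, 49688, 12, 12, 21711016731996786643488835122975652913638478312002550247133563294326158524416),
   (6467, 49816, 12, 13, 72370055773322622141301141064276612599252687771827269128698108081107783122944),
   (6482, 51736, 12, 14, 65133050195990359927327954501233618358614722561617761761918628082247513669632),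
   (16685, 55332, 13, 5, 65133050195990359925758682060542301421344951849221659390054026868059363344384),
   (16701, 55396, 13, 7, 21711016731996786643488838116131006167327654955408364479294550950050109849600),
   (5165, 54312, 13, 9, 94081072505319408781651425319558925131058341963956220783623278874967729504256),
   (5181, 54440, 13, 11, 50659039041325835499381581375147629877041045070142925872868414634180810375168),
   (16850, 59412, 14, 6, 72370055773322622139731868623585295661982916897171889927620143484137715531776),
   (5330, 58392, 14, 10, 101318078082651670995624611882601919371611236582435493534541526907988484292608)]

def R2 : List (E4 × ℕ × ℕ) :=
  [((1, 5, 7, 7), 18, 1), ((1, 7, 5, 7), 260, 2), ((1, 7, 7, 5), 4104, 3), ((5, 1, 7, 7), 1179648, 20),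
   ((5, 3, 5, 7), 17039360, 24), ((5, 3, 7, 5), 268959744, 28), ((5, 5, 3, 7), 77309411328, 36),
   ((5, 5, 7, 3), 5066549580791808, 52), ((5, 7, 1, 7), 1116691496960, 40), ((5, 7, 3, 5), 17626545782784, 44),
   ((5, 7, 5, 3), 73183493944770560, 56), ((5, 7, 7, 1), 1155173304420532224, 60),
   ((7, 1, 5, 7), 37748736, 22), ((7, 1, 7, 5), 545259520, 23), ((7, 5, 1, 7), 2473901162496, 41),
   ((7, 5, 3, 5), 35734127902720, 45), ((7, 5, 5, 3), 162129586585337856, 57),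
   ((7, 5, 7, 1), 2341871806232657920, 61), ((7, 7, 1, 5), 79164837199872, 43),
   ((7, 7, 5, 1), 5188146770730811392, 62), ((2, 3, 7, 7), 65552, 4), ((3, 3, 7, 7), 65568, 16),
   ((2, 7, 3, 7), 4294967552, 8), ((3, 7, 3, 7), 4294968320, 32), ((2, 7, 7, 3), 281474976714752, 12),
   ((3, 7, 7, 3), 281474976743424, 48), ((3, 2, 7, 7), 131104, 5), ((3, 3, 6, 7), 262208, 18),
   ((3, 5, 5, 7), 576, 6), ((3, 3, 7, 6), 524416, 19), ((3, 5, 7, 5), 8320, 7), ((3, 6, 3, 7), 8589935104, 9),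
   ((3, 6, 7, 3), 562949953429504, 13), ((3, 7, 2, 7), 17179870208, 10), ((3, 7, 3, 6), 34359740416, 35),
   ((3, 7, 5, 5), 18432, 11), ((3, 7, 6, 3), 1125899906859008, 14), ((3, 7, 7, 2), 2251799813718016, 15),
   ((7, 2, 3, 7), 137472507904, 25), ((7, 3, 3, 7), 137506062336, 37), ((7, 2, 7, 3), 9007199791611904, 29),
   ((7, 3, 7, 3), 9007201402224640, 53), ((7, 3, 2, 7), 274945015808, 26), ((7, 3, 3, 6), 549890031616, 39),
   ((7, 3, 5, 5), 1207959552, 27), ((7, 3, 6, 3), 18014399583223808, 30),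
   ((7, 3, 7, 2), 36028799166447616, 31), ((7, 7, 2, 3), 288300744895889408, 46),
   ((7, 7, 3, 3), 288371113640067072, 58), ((7, 7, 3, 2), 576601489791778816, 47)]

def G2 : List (G5) :=
  [(16920, 6210, 1, 2, 3940675443884033), (17025, 10305, 2, 1, 54606428951937024),
   (16921, 14402, 3, 3, 562958543486976), (18465, 18465, 4, 1, 595605749413969920),
   (16922, 22594, 5, 2, 1125925676646400), (17057, 26689, 6, 1, 18014681977323520),
   (16923, 30786, 7, 3, 8589934592), (33825, 33825, 8, 1, 9857816634360594432),
   (16924, 38978, 9, 2, 3940649673949184), (17089, 43073, 10, 1, 54606145481867264),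
   (16925, 47170, 11, 3, 562949953421312), (19489, 51233, 12, 1, 595601050719748096),
   (16926, 55362, 13, 2, 1125899906842624), (17121, 59457, 14, 1, 18014398509481984), (16927, 63554, 15, 3, 0)]

def Es : List (ℕ × ℕ) :=
  [(7237005577332262213973186937187413397774465370980864847028467965257519726592, 252),
   (14474011154664524427946373874374826795123577539921641370918048882897333518336, 253),
   (28948022309329048855892749245327330217049207983986847041820636933806700363776, 254),
   (1569278427002023444690659132813726057421421917266753093632, 190)]


def F1 (e : G5) (n : ℕ) : Bool :=
  tb e.2.2.1 (n % 4) && tb e.2.2.1 (n / 4 % 4) &&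
    (tb e.2.2.2.1 (n / 16 % 4) && tb e.2.2.2.1 (n / 64 % 4))

def F2 (e : G5) (n : ℕ) : Bool :=
  tb e.2.2.1 (n % 4) && tb e.2.2.1 (n / 4 % 4) && tb e.2.2.1 (n / 16 % 4)

def emask (p : ℕ) : ℕ := 2 ^ p ^^^ 2 ^ (p + 84) ^^^ 2 ^ (p + 168) ^^^ 2 ^ (p + 252)

theorem R2_ok : relsOK W2 R2 = true := by decide +kernel
theorem R1_ok : relsOK W1 R1 = true := by decide +kernel

def upTo (n : ℕ) (p : ℕ → Bool) : Bool := (List.range n).all p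

theorem red2 : upTo 64 (fun n => Nat.beq (red (R2.map Prod.snd) (2 ^ n ^^^ gsum F2 G2 n)) 0) = true := by
  decide +kernel
theorem red1 : upTo 256 (fun n =>
    Nat.beq (red Es (red (R1.map Prod.snd) (2 ^ n ^^^ gsum F1 G1 n))) 0) = true := by
  decide +kernel
theorem es0 : red (R1.map Prod.snd) (7237005577332262213973186937187413397774465370980864847028467965257519726592 ^^^ emask 0) = 0 := by decide +kernel

/-! ### Coefficients at spikes -/

theorem mon_cmb (a b : E4) : mon (cmb a b) = mon a * mon b ^ 2 := by
  simp only [mon_eq, cmb]; ring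

theorem par_half (d : E4) : cmb (par d) (half d) = d := by
  simp only [cmb, par, half]
  ext <;> simp <;> omega

theorem dg_cmb (a b : E4) : dg (cmb a b) = dg a + 2 * dg b := by
  simp only [dg, cmb]; omega

theorem dg_par (d : E4) : dg d = dg (par d) + 2 * dg (half d) := by
  conv_lhs => rw [← par_half d]
  rw [dg_cmb]

theorem dg_par_le (d : E4) : dg (par d) ≤ 4 := by
  simp only [dg, par]; omega

theorem zz (b : kk) : b ^ 2 = b := by revert b; decide

theorem hom_coeff {A : P4} {k : ℕ} (hA : A.IsHomogeneous k) {d : E4} (h : dg d ≠ k) :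
    coeff (fs d) A = 0 := by
  apply hA.coeff_eq_zero
  rw [Finsupp.degree_eq_sum, sum_fs]; exact h

theorem coeff_mul_sq (A B : P4) (k : ℕ) (hA : A.IsHomogeneous k) (s e : E4)
    (h0 : s.1 ≤ 1) (h1 : s.2.1 ≤ 1) (h2 : s.2.2.1 ≤ 1) (h3 : s.2.2.2 ≤ 1) (hk : k ≤ dg s) :
    coeff (fs (cmb s e)) (A * B ^ 2) = coeff (fs s) A * coeff (fs e) B := by
  induction B using MvPolynomial.induction_on' with
  | monomial m b =>
    obtain ⟨m, rfl⟩ : ∃ q, fs q = m := ⟨_, fs_surj m⟩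
    have hm : (monomial (fs m) b : P4) ^ 2 = monomial (fs (cmb (0, 0, 0, 0) m)) b := by
      rw [monomial_pow, zz]
      have : 2 • fs m = fs (cmb (0, 0, 0, 0) m) := by
        ext i; fin_cases i <;> simp [fs, cmb]
      rw [this]
    rw [hm, coeff_mul_monomial', coeff_monomial]
    by_cases he : m = e
    · subst he
      have h1 : fs (cmb (0, 0, 0, 0) m) ≤ fs (cmb s m) := by
        intro i; fin_cases i <;> simp [fs, cmb]
      have h2 : fs (cmb s m) - fs (cmb (0, 0, 0, 0) m) = fs s := by
        ext i; fin_cases i <;> simp [fs, cmb]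
      rw [if_pos h1, if_pos rfl, h2]
    · rw [if_neg fun h => he (fs_inj h), mul_zero]
      split_ifs with hle
      · have l0 := hle 0
        have l1 := hle 1
        have l2 := hle 2
        have l3 := hle 3
        simp [fs, cmb] at l0 l1 l2 l3
        have h4 : fs (cmb s e) - fs (cmb (0, 0, 0, 0) m) = fs (s.1 + 2 * e.1 - 2 * m.1,
            s.2.1 + 2 * e.2.1 - 2 * m.2.1, s.2.2.1 + 2 * e.2.2.1 - 2 * m.2.2.1,
            s.2.2.2 + 2 * e.2.2.2 - 2 * m.2.2.2) := by
          ext i; fin_cases i <;> simp [fs, cmb]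
        rw [h4, hom_coeff hA, zero_mul]
        intro h5
        apply he
        simp only [dg] at h5 hk
        ext <;> omega
      · rfl
  | add p q hp hq =>
    rw [CharTwo.add_sq, mul_add, coeff_add, coeff_add, hp, hq, mul_add]

theorem substM_hom (M : Matrix (Fin 4) (Fin 4) kk) {g : P4} {n : ℕ} (hg : g.IsHomogeneous n) :
    (substM M g).IsHomogeneous n := by
  have := hg.aeval (g := fun i => ∑ j, M i j • (X j : P4)) (n := 1) (fun i => by
    refine IsHomogeneous.sum _ _ _ fun j _ => ?_
    rw [smul_eq_C_mul]
    exact (isHomogeneous_X _ _).C_mul _)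
  rwa [one_mul] at this

/-- The coefficient of `s` in the transform of the monomial `d`. -/
def sc (M : Matrix (Fin 4) (Fin 4) kk) (s d : E4) : kk := coeff (fs s) (substM M (mon d))

theorem sc_deg (M : Matrix (Fin 4) (Fin 4) kk) {s d : E4} (h : dg s ≠ dg d) : sc M s d = 0 :=
  hom_coeff (substM_hom M (mon_hom d)) h

theorem sc_cmb (M : Matrix (Fin 4) (Fin 4) kk) (s e a b : E4)
    (h0 : s.1 ≤ 1) (h1 : s.2.1 ≤ 1) (h2 : s.2.2.1 ≤ 1) (h3 : s.2.2.2 ≤ 1) (hk : dg a ≤ dg s) :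
    sc M (cmb s e) (cmb a b) = sc M s a * sc M e b := by
  rw [sc, mon_cmb, map_mul, map_pow]
  exact coeff_mul_sq _ _ _ (substM_hom M (mon_hom a)) s e h0 h1 h2 h3 hk

def s3 : E4 := (1, 1, 1, 0)
def s1 : E4 := (1, 0, 0, 0)

theorem sc_s3 (M : Matrix (Fin 4) (Fin 4) kk) (e a b : E4) (h : dg a ≤ 3) :
    sc M (cmb s3 e) (cmb a b) = sc M s3 a * sc M e b := by
  apply sc_cmb <;> simp [s3]; exact h

theorem sc_s1 (M : Matrix (Fin 4) (Fin 4) kk) (e a b : E4) (h : dg a ≤ 1) :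
    sc M (cmb s1 e) (cmb a b) = sc M s1 a * sc M e b := by
  apply sc_cmb <;> simp [s1]; exact h

def sg1 : E4 := (15, 3, 3, 0)
def sg2 : E4 := (7, 7, 7, 0)
theorem sg1_eq : sg1 = cmb s3 (cmb s3 (cmb s1 s1)) := rfl
theorem sg2_eq : sg2 = cmb s3 (cmb s3 s3) := rfl

theorem xi_dg (i : ℕ) : dg (xi (i % 4)) = 3 := by
  have : i % 4 < 4 := Nat.mod_lt _ (by norm_num)
  interval_cases i % 4 <;> rfl

theorem dl_dg (i : ℕ) : dg (dl (i % 4)) = 1 := by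
  have : i % 4 < 4 := Nat.mod_lt _ (by norm_num)
  interval_cases i % 4 <;> rfl

theorem sc1_expo (M : Matrix (Fin 4) (Fin 4) kk) (n : ℕ) : sc M sg1 (W1.expo n) =
    sc M s3 (xi (n % 4)) * (sc M s3 (xi (n / 4 % 4)) *
      (sc M s1 (dl (n / 16 % 4)) * sc M s1 (dl (n / 64 % 4)))) := by
  rw [sg1_eq]
  simp only [W1]
  rw [sc_s3, sc_s3, sc_s1]
  · rw [dl_dg]
  · rw [xi_dg]
  · rw [xi_dg]

theorem sc2_expo (M : Matrix (Fin 4) (Fin 4) kk) (n : ℕ) : sc M sg2 (W2.expo n) =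
    sc M s3 (xi (n % 4)) * (sc M s3 (xi (n / 4 % 4)) * sc M s3 (xi (n / 16 % 4))) := by
  rw [sg2_eq]
  simp only [W2]
  rw [sc_s3, sc_s3]
  · rw [xi_dg]
  · rw [xi_dg]

theorem s3_dg : dg s3 = 3 := rfl

theorem sc1_low (M : Matrix (Fin 4) (Fin 4) kk) (d : E4) (hd : dg d = 21) (h : W1.low d = true) :
    sc M sg1 d = 0 := by
  simp only [W1, Bool.or_eq_true, Nat.blt_eq] at h
  have a := dg_par d
  have b := dg_par (half d)
  have a' := dg_par_le d
  have b' := dg_par_le (half d)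
  rw [sg1_eq, ← par_half d, sc_s3 _ _ _ _ (by omega)]
  by_cases h1 : dg (par d) < 3
  · rw [sc_deg M (s := s3) (by rw [s3_dg]; omega), zero_mul]
  · rw [← par_half (half d), sc_s3 _ _ _ _ (by omega)]
    rw [sc_deg M (s := s3) (d := par (half d)) (by rw [s3_dg]; omega)]; simp

theorem sc2_low (M : Matrix (Fin 4) (Fin 4) kk) (d : E4) (hd : dg d = 21) (h : W2.low d = true) :
    sc M sg2 d = 0 := by
  simp only [W2, Bool.or_eq_true, Nat.blt_eq] at h
  have a := dg_par d
  have b := dg_par (half d)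
  have c := dg_par (half (half d))
  have a' := dg_par_le d
  have b' := dg_par_le (half d)
  rw [sg2_eq, ← par_half d, sc_s3 _ _ _ _ (by omega)]
  by_cases h1 : dg (par d) < 3
  · rw [sc_deg M (s := s3) (by rw [s3_dg]; omega), zero_mul]
  · rw [← par_half (half d), sc_s3 _ _ _ _ (by omega)]
    by_cases h2 : dg (par (half d)) < 3
    · rw [sc_deg M (s := s3) (d := par (half d)) (by rw [s3_dg]; omega)]; simp
    · have e3 : s3 = cmb s3 (0, 0, 0, 0) := rfl
      have : sc M s3 (half (half d)) = 0 := by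
        rw [e3, ← par_half (half (half d)), sc_s3 _ _ _ _ (by omega),
          sc_deg M (s := s3) (d := par (half (half d))) (by rw [s3_dg]; omega), zero_mul]
      rw [this]; simp

theorem coeff_X0 (p : P4) (a b c d : ℕ) : coeff (fs (a, b, c, d)) (X 0 * p) =
    if a = 0 then 0 else coeff (fs (a - 1, b, c, d)) p := by
  rw [coeff_X_mul']
  have : fs (a, b, c, d) - Finsupp.single 0 1 = fs (a - 1, b, c, d) := by
    ext i; fin_cases i <;> simp [fs]
  rw [this]; simp [fs]
theorem coeff_X1 (p : P4) (a b c d : ℕ) : coeff (fs (a, b, c, d)) (X 1 * p) =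
    if b = 0 then 0 else coeff (fs (a, b - 1, c, d)) p := by
  rw [coeff_X_mul']
  have : fs (a, b, c, d) - Finsupp.single 1 1 = fs (a, b - 1, c, d) := by
    ext i; fin_cases i <;> simp [fs]
  rw [this]; simp [fs]
theorem coeff_X2 (p : P4) (a b c d : ℕ) : coeff (fs (a, b, c, d)) (X 2 * p) =
    if c = 0 then 0 else coeff (fs (a, b, c - 1, d)) p := by
  rw [coeff_X_mul']
  have : fs (a, b, c, d) - Finsupp.single 2 1 = fs (a, b, c - 1, d) := by
    ext i; fin_cases i <;> simp [fs]
  rw [this]; simp [fs]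
theorem coeff_X3 (p : P4) (a b c d : ℕ) : coeff (fs (a, b, c, d)) (X 3 * p) =
    if d = 0 then 0 else coeff (fs (a, b, c, d - 1)) p := by
  rw [coeff_X_mul']
  have : fs (a, b, c, d) - Finsupp.single 3 1 = fs (a, b, c, d - 1) := by
    ext i; fin_cases i <;> simp [fs]
  rw [this]; simp [fs]

theorem coeff_one0 : coeff (fs (0, 0, 0, 0)) (1 : P4) = 1 := by
  have : fs (0, 0, 0, 0) = 0 := by ext i; fin_cases i <;> simp [fs]
  rw [this]; simp

/-- A linear form. -/
def lf (M : Matrix (Fin 4) (Fin 4) kk) (i : Fin 4) : P4 := ∑ j, M i j • X j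

theorem coeff_lf (M : Matrix (Fin 4) (Fin 4) kk) (i : Fin 4) (p : P4) (a b c d : ℕ) :
    coeff (fs (a, b, c, d)) (lf M i * p) =
      M i 0 * (if a = 0 then 0 else coeff (fs (a - 1, b, c, d)) p) +
      M i 1 * (if b = 0 then 0 else coeff (fs (a, b - 1, c, d)) p) +
      M i 2 * (if c = 0 then 0 else coeff (fs (a, b, c - 1, d)) p) +
      M i 3 * (if d = 0 then 0 else coeff (fs (a, b, c, d - 1)) p) := by
  simp only [lf, Fin.sum_univ_four, add_mul, smul_mul_assoc, coeff_add, coeff_smul, coeff_X0,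
    coeff_X1, coeff_X2, coeff_X3, smul_eq_mul]

theorem substM_mon (M : Matrix (Fin 4) (Fin 4) kk) (d : E4) : substM M (mon d) =
    lf M 0 ^ d.1 * lf M 1 ^ d.2.1 * lf M 2 ^ d.2.2.1 * lf M 3 ^ d.2.2.2 := by
  simp only [mon_eq, substM, map_mul, map_pow, aeval_X, lf]

/-- The relevant minors. -/
def mnr (M : Matrix (Fin 4) (Fin 4) kk) (a b c : Fin 4) : kk :=
  M a 0 * (M b 1 * M c 2 + M b 2 * M c 1) + M a 1 * (M b 0 * M c 2 + M b 2 * M c 0) +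
    M a 2 * (M b 0 * M c 1 + M b 1 * M c 0)

theorem coeff3 (M : Matrix (Fin 4) (Fin 4) kk) (a b c : Fin 4) :
    coeff (fs s3) (lf M a * (lf M b * (lf M c * 1))) = mnr M a b c := by
  simp only [s3, coeff_lf]; simp [coeff_one0, mnr]

theorem coeff1 (M : Matrix (Fin 4) (Fin 4) kk) (a : Fin 4) :
    coeff (fs s1) (lf M a * 1) = M a 0 := by
  simp only [s1, coeff_lf]; simp [coeff_one0]

def Mc (m : ℕ) : Matrix (Fin 4) (Fin 4) kk := fun i j => b2z (tb m (4 * i.val + j.val))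

def mnb (m a b c : ℕ) : Bool :=
  ((tb m (4 * a) && ((tb m (4 * b + 1) && tb m (4 * c + 2)) ^^ (tb m (4 * b + 2) && tb m (4 * c + 1))))
  ^^ (tb m (4 * a + 1) && ((tb m (4 * b) && tb m (4 * c + 2)) ^^ (tb m (4 * b + 2) && tb m (4 * c)))))
  ^^ (tb m (4 * a + 2) && ((tb m (4 * b) && tb m (4 * c + 1)) ^^ (tb m (4 * b + 1) && tb m (4 * c))))

theorem mnr_mc (m : ℕ) (a b c : Fin 4) : mnr (Mc m) a b c = b2z (mnb m a b c) := by
  simp only [mnr, mnb, Mc, b2z_xor, b2z_and]; rfl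

def mnx (m : ℕ) : ℕ → Bool
  | 0 => mnb m 1 2 3
  | 1 => mnb m 0 2 3
  | 2 => mnb m 0 1 3
  | _ => mnb m 0 1 2

theorem sc_xi (m i : ℕ) (hi : i < 4) : sc (Mc m) s3 (xi i) = b2z (mnx m i) := by
  rw [sc, substM_mon]
  interval_cases i
  · have := coeff3 (Mc m) 1 2 3
    rw [mnr_mc] at this
    simpa [xi, mnx, mul_assoc] using this
  · have := coeff3 (Mc m) 0 2 3
    rw [mnr_mc] at this
    simpa [xi, mnx, mul_assoc] using this
  · have := coeff3 (Mc m) 0 1 3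
    rw [mnr_mc] at this
    simpa [xi, mnx, mul_assoc] using this
  · have := coeff3 (Mc m) 0 1 2
    rw [mnr_mc] at this
    simpa [xi, mnx, mul_assoc] using this

theorem sc_dl (m i : ℕ) (hi : i < 4) : sc (Mc m) s1 (dl i) = b2z (tb m (4 * i)) := by
  rw [sc, substM_mon]
  interval_cases i
  · have := coeff1 (Mc m) 0
    simpa [dl, Mc] using this
  · have := coeff1 (Mc m) 1
    simpa [dl, Mc] using this
  · have := coeff1 (Mc m) 2
    simpa [dl, Mc] using this
  · have := coeff1 (Mc m) 3
    simpa [dl, Mc] using this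

def prd (m p i j : ℕ) : Bool :=
  ((tb m (4 * i) && tb p j) ^^ (tb m (4 * i + 1) && tb p (4 + j))) ^^
    ((tb m (4 * i + 2) && tb p (8 + j)) ^^ (tb m (4 * i + 3) && tb p (12 + j)))

def gOK (G : List G5) : Bool := G.all fun e => upTo 4 fun i =>
  ((mnx e.1 i == tb e.2.2.1 i) && (tb e.1 (4 * i) == tb e.2.2.2.1 i)) &&
    upTo 4 fun j => prd e.1 e.2.1 i j == Nat.beq i j

theorem upTo_spec {n : ℕ} {p : ℕ → Bool} (h : upTo n p = true) {i : ℕ} (hi : i < n) : p i = true :=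
  List.all_eq_true.1 h i (List.mem_range.2 hi)

theorem gOK1 : gOK G1 = true := by decide +kernel
theorem gOK2 : gOK G2 = true := by decide +kernel

theorem g_unit {G : List G5} (hG : gOK G = true) {e : G5} (he : e ∈ G) : Mc e.1 ∈ glSet := by
  have h := List.all_eq_true.1 hG e he
  have hm : Mc e.1 * Mc e.2.1 = 1 := by
    ext i j
    have h1 := upTo_spec h i.isLt
    rw [Bool.and_eq_true] at h1
    have h2 := eq_of_beq (upTo_spec h1.2 j.isLt)
    have h3 : (Mc e.1 * Mc e.2.1) i j = b2z (prd e.1 e.2.1 i j) := by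
      simp only [Matrix.mul_apply, Fin.sum_univ_four, prd, b2z_xor, b2z_and, Mc]
      simp [add_assoc]
    rw [h3, h2]
    fin_cases i <;> fin_cases j <;> rfl
  exact (Matrix.isUnit_iff_isUnit_det _).2 (Matrix.isUnit_det_of_right_inverse hm)

theorem g_u {G : List G5} (hG : gOK G = true) {e : G5} (he : e ∈ G) {i : ℕ} (hi : i < 4) :
    sc (Mc e.1) s3 (xi i) = b2z (tb e.2.2.1 i) := by
  have h := upTo_spec (List.all_eq_true.1 hG e he) hi
  simp only [Bool.and_eq_true] at h
  rw [sc_xi _ _ hi, eq_of_beq h.1.1]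

theorem g_v {G : List G5} (hG : gOK G = true) {e : G5} (he : e ∈ G) {i : ℕ} (hi : i < 4) :
    sc (Mc e.1) s1 (dl i) = b2z (tb e.2.2.2.1 i) := by
  have h := upTo_spec (List.all_eq_true.1 hG e he) hi
  simp only [Bool.and_eq_true] at h
  rw [sc_dl _ _ hi, eq_of_beq h.1.2]

theorem sc1_F {e : G5} (he : e ∈ G1) (n : ℕ) : sc (Mc e.1) sg1 (W1.expo n) = b2z (F1 e n) := by
  have hm : ∀ x, x % 4 < 4 := fun x => Nat.mod_lt _ (by norm_num)
  rw [sc1_expo, g_u gOK1 he (hm _), g_u gOK1 he (hm _), g_v gOK1 he (hm _), g_v gOK1 he (hm _)]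
  simp only [F1, b2z_and, mul_assoc]

theorem sc2_F {e : G5} (he : e ∈ G2) (n : ℕ) : sc (Mc e.1) sg2 (W2.expo n) = b2z (F2 e n) := by
  have hm : ∀ x, x % 4 < 4 := fun x => Nat.mod_lt _ (by norm_num)
  rw [sc2_expo, g_u gOK2 he (hm _), g_u gOK2 he (hm _), g_u gOK2 he (hm _)]
  simp only [F2, b2z_and, mul_assoc]

/-! ### Weights -/

def om1 : ℕ → ℕ := fun j => if j < 2 then 3 else if j < 4 then 1 else 0
def om2 : ℕ → ℕ := fun j => if j < 3 then 3 else 0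

theorem wv0 (d : E4) : wv (fs d) 0 = dg (par d) := by
  simp [wv, Fin.sum_univ_four, fs, dg, par]
theorem wv1 (d : E4) : wv (fs d) 1 = dg (par (half d)) := by
  simp [wv, Fin.sum_univ_four, fs, dg, par, half]
theorem wv2 (d : E4) : wv (fs d) 2 = dg (par (half (half d))) := by
  simp [wv, Fin.sum_univ_four, fs, dg, par, half, Nat.div_div_eq_div_mul]
theorem wv3 (d : E4) : wv (fs d) 3 = dg (par (half (half (half d)))) := by
  simp [wv, Fin.sum_univ_four, fs, dg, par, half, Nat.div_div_eq_div_mul]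

theorem low1_lt (d : E4) (hd : dg d = 21) (h : W1.low d = true) : wLt (wv (fs d)) om1 := by
  simp only [W1, Bool.or_eq_true, Nat.blt_eq] at h
  have a := dg_par d
  have b := dg_par (half d)
  have a' := dg_par_le d
  by_cases h1 : dg (par d) < 3
  · exact ⟨0, by simp, by rw [wv0]; simpa [om1] using h1⟩
  · refine ⟨1, ?_, by rw [wv1]; simp [om1]; omega⟩
    intro i hi
    obtain rfl : i = 0 := by omega
    rw [wv0]; simp [om1]; omega

theorem low2_lt (d : E4) (hd : dg d = 21) (h : W2.low d = true) : wLt (wv (fs d)) om2 := by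
  simp only [W2, Bool.or_eq_true, Nat.blt_eq] at h
  have a := dg_par d
  have b := dg_par (half d)
  have a' := dg_par_le d
  have b' := dg_par_le (half d)
  by_cases h1 : dg (par d) < 3
  · exact ⟨0, by simp, by rw [wv0]; simpa [om2] using h1⟩
  by_cases h2 : dg (par (half d)) < 3
  · refine ⟨1, ?_, by rw [wv1]; simp [om2]; omega⟩
    intro i hi
    obtain rfl : i = 0 := by omega
    rw [wv0]; simp [om2]; omega
  · refine ⟨2, ?_, by rw [wv2]; simp [om2]; omega⟩
    intro i hi
    obtain rfl | rfl : i = 0 ∨ i = 1 := by omega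
    · rw [wv0]; simp [om2]; omega
    · rw [wv1]; simp [om2]; omega

theorem lt1_low (d : E4) (hd : dg d = 21) (h : wLt (wv (fs d)) om1) : W1.low d = true := by
  simp only [W1, Bool.or_eq_true, Nat.blt_eq]
  obtain ⟨j, hj, hl⟩ := h
  have a := dg_par d
  have b := dg_par (half d)
  have c := dg_par (half (half d))
  have e := dg_par (half (half (half d)))
  rcases Nat.lt_or_ge j 4 with h4 | h4
  · interval_cases j
    · rw [wv0] at hl; simp [om1] at hl; omega
    · rw [wv1] at hl; simp [om1] at hl; omega
    · have h0 := hj 0 (by omega)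
      have h1 := hj 1 (by omega)
      rw [wv0] at h0; rw [wv1] at h1; rw [wv2] at hl
      simp [om1] at hl h0 h1; omega
    · have h0 := hj 0 (by omega)
      have h1 := hj 1 (by omega)
      have h2 := hj 2 (by omega)
      rw [wv0] at h0; rw [wv1] at h1; rw [wv2] at h2; rw [wv3] at hl
      simp [om1] at hl h0 h1 h2; omega
  · have : om1 j = 0 := by simp only [om1]; split_ifs <;> omega
    omega

theorem lt2_low (d : E4) (h : wLt (wv (fs d)) om2) : W2.low d = true := by
  simp only [W2, Bool.or_eq_true, Nat.blt_eq]
  obtain ⟨j, hj, hl⟩ := h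
  rcases Nat.lt_or_ge j 3 with h4 | h4
  · interval_cases j
    · rw [wv0] at hl; simp [om2] at hl; omega
    · rw [wv1] at hl; simp [om2] at hl; omega
    · rw [wv2] at hl; simp [om2] at hl; omega
  · have : om2 j = 0 := by simp only [om2]; split_ifs <;> omega
    omega

def okE (W : WS) (d : E4) : Bool := eqE (W.expo (W.code d)) d && Nat.blt (W.code d) W.N

def all21 (p : E4 → Bool) : Bool :=
  upTo 22 fun a => upTo (22 - a) fun b => upTo (22 - a - b) fun c => p (a, b, c, 21 - a - b - c)

theorem all21_spec {p : E4 → Bool} (h : all21 p = true) (d : E4) (hd : dg d = 21) : p d = true := by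
  obtain ⟨a, b, c, e⟩ := d
  simp only [dg] at hd
  have h1 := upTo_spec h (i := a) (by omega)
  have h2 := upTo_spec h1 (i := b) (by omega)
  have h3 := upTo_spec h2 (i := c) (by omega)
  have : e = 21 - a - b - c := by omega
  rw [this]; exact h3

theorem chk1 : all21 (fun d => W1.low d || (Nat.blt 1 (dg (par (half (half d)))) || okE W1 d)) = true := by
  decide +kernel
theorem chk2 : all21 (fun d => W2.low d || okE W2 d) = true := by
  decide +kernel

theorem le1 (d : E4) (hd : dg d = 21) (h : wLe (wv (fs d)) om1) :
    W1.low d = true ∨ okE W1 d = true := by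
  rcases h with h | h
  · have h2 := congrFun h 2
    rw [wv2] at h2
    have := all21_spec chk1 d hd
    simp only [Bool.or_eq_true, Nat.blt_eq] at this
    simp [om1] at h2
    rcases this with h | h | h
    · exact Or.inl h
    · omega
    · exact Or.inr h
  · exact Or.inl (lt1_low d hd h)

theorem le2 (d : E4) (hd : dg d = 21) : W2.low d = true ∨ okE W2 d = true := by
  simpa only [Bool.or_eq_true] using all21_spec chk2 d hd

theorem okE_spec {W : WS} {d : E4} (h : okE W d = true) : W.expo (W.code d) = d ∧ W.code d < W.N := by
  simp only [okE, Bool.and_eq_true, Nat.blt_eq] at h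
  exact ⟨eqE_eq h.1, h.2⟩

theorem lin_comb (W : WS) (c c' : ℕ → kk) (a : kk) :
    ∑ n ∈ Finset.range W.N, (c n + a * c' n) • mon (W.expo n) =
    ∑ n ∈ Finset.range W.N, c n • mon (W.expo n) +
      a • ∑ n ∈ Finset.range W.N, c' n • mon (W.expo n) := by
  rw [Finset.smul_sum, ← Finset.sum_add_distrib]
  refine Finset.sum_congr rfl fun n _ => ?_
  rw [add_smul, mul_smul]

theorem decomp (W : WS) (om : ℕ → ℕ)
    (hl : ∀ d, dg d = 21 → W.low d = true → wLt (wv (fs d)) om)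
    (hle : ∀ d, dg d = 21 → wLe (wv (fs d)) om → W.low d = true ∨ okE W d = true)
    {f : P4} (hf : f ∈ Pw 21 om) :
    ∃ c : ℕ → kk, f - ∑ n ∈ Finset.range W.N, c n • mon (W.expo n) ∈ PwLt 21 om := by
  induction hf using Submodule.span_induction with
  | mem x hx =>
    obtain ⟨d, hd, hw, rfl⟩ := hx
    obtain ⟨d, rfl⟩ : ∃ q, fs q = d := ⟨_, fs_surj d⟩
    have hd' := hd
    rw [sum_fs] at hd
    rcases hle d hd hw with h | h
    · refine ⟨fun _ => 0, ?_⟩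
      simp only [zero_smul, Finset.sum_const_zero, sub_zero]
      exact Submodule.subset_span ⟨_, hd', hl d hd h, rfl⟩
    · obtain ⟨h1, h2⟩ := okE_spec h
      refine ⟨fun n => if n = W.code d then 1 else 0, ?_⟩
      simp only [ite_smul, one_smul, zero_smul, Finset.sum_ite_eq', Finset.mem_range, h2, if_true, h1]
      change mon d - mon d ∈ _
      rw [sub_self]; exact Submodule.zero_mem _
  | zero =>
    refine ⟨fun _ => 0, ?_⟩
    simp
  | add x y _ _ hx hy =>
    obtain ⟨c, hc⟩ := hx
    obtain ⟨c', hc'⟩ := hy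
    refine ⟨fun n => c n + 1 * c' n, ?_⟩
    rw [lin_comb, one_smul]
    have := Submodule.add_mem _ hc hc'
    convert this using 1; abel
  | smul a x _ hx =>
    obtain ⟨c, hc⟩ := hx
    refine ⟨fun n => 0 + a * c n, ?_⟩
    rw [lin_comb W (fun _ => 0) c a]
    have := Submodule.smul_mem _ a hc
    rw [smul_sub] at this
    simpa using this

def Dn (om : ℕ → ℕ) : Submodule kk P4 := hitSub 21 ⊔ PwLt 21 om

theorem wDenom_le (om : ℕ → ℕ) : wDenom 21 om ≤ Dn om :=
  sup_le_sup inf_le_left le_rfl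

theorem PwLt_le (om : ℕ → ℕ) : PwLt 21 om ≤ Pw 21 om := by
  refine Submodule.span_mono ?_
  rintro _ ⟨d, hd, hw, rfl⟩
  exact ⟨d, hd, Or.inr hw, rfl⟩

theorem Dn_mem (om : ℕ → ℕ) {f : P4} (hf : f ∈ Pw 21 om) (h : f ∈ Dn om) : f ∈ wDenom 21 om := by
  obtain ⟨a, ha, b, hb, rfl⟩ := Submodule.mem_sup.1 h
  refine Submodule.add_mem_sup ⟨ha, ?_⟩ hb
  exact (Submodule.add_mem_iff_left _ (PwLt_le om hb)).1 hf

theorem substM_one (f : P4) : substM 1 f = f := by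
  have : substM 1 = AlgHom.id kk P4 := by
    apply MvPolynomial.algHom_ext
    intro i
    simp [substM, Matrix.one_apply]
  rw [this]; rfl

/-- The invariance condition. -/
def GInv (om : ℕ → ℕ) (f : P4) : Prop := ∀ M ∈ glSet, substM M f - f ∈ wDenom 21 om

theorem functional (W : WS) (om : ℕ → ℕ) (sg : E4)
    (hlow : ∀ d, dg d = 21 → wLt (wv (fs d)) om → W.low d = true)
    (hs : ∀ M d, dg d = 21 → W.low d = true → sc M sg d = 0)
    (hh : ∀ p ∈ hitSub 21, coeff (fs sg) p = 0)
    {f : P4} (c : ℕ → kk) (hi : GInv om f)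
    (hc : f - ∑ n ∈ Finset.range W.N, c n • mon (W.expo n) ∈ PwLt 21 om) :
    ∀ M ∈ glSet, ∑ n ∈ Finset.range W.N, c n * sc M sg (W.expo n) = coeff (fs sg) f := by
  have hk : ∀ M, PwLt 21 om ≤ LinearMap.ker ((lcoeff kk (fs sg)) ∘ₗ (substM M).toLinearMap) := by
    intro M
    refine Submodule.span_le.2 ?_
    rintro _ ⟨d, hd, hw, rfl⟩
    obtain ⟨d, rfl⟩ : ∃ q, fs q = d := ⟨_, fs_surj d⟩
    rw [sum_fs] at hd
    exact hs M d hd (hlow d hd hw)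
  have hD : ∀ p ∈ Dn om, coeff (fs sg) p = 0 := by
    intro p hp
    obtain ⟨a, ha, b, hb, rfl⟩ := Submodule.mem_sup.1 hp
    have h1 : coeff (fs sg) (substM 1 b) = 0 := hk 1 hb
    rw [substM_one] at h1
    rw [coeff_add, hh a ha, h1, add_zero]
  intro M hM
  have h1 := hD _ (wDenom_le om (hi M hM))
  have h2 : coeff (fs sg) (substM M (f - ∑ n ∈ Finset.range W.N, c n • mon (W.expo n))) = 0 := hk M hc
  rw [coeff_sub, sub_eq_zero] at h1
  rw [map_sub, coeff_sub, sub_eq_zero, h1, map_sum, coeff_sum] at h2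
  rw [h2]
  refine Finset.sum_congr rfl fun n _ => ?_
  rw [map_smul, coeff_smul]; rfl

def xall (F : G5 → ℕ → Bool) (G : List G5) (n : ℕ) : Bool := G.foldr (fun e b => F e n ^^ b) false

theorem xall_sum (N : ℕ) (F : G5 → ℕ → Bool) (G : List G5) (c : ℕ → kk) (s : kk)
    (h : ∀ e ∈ G, ∑ n ∈ Finset.range N, c n * b2z (F e n) = s) :
    ∑ n ∈ Finset.range N, c n * b2z (xall F G n) = (G.length : kk) * s := by
  induction G with
  | nil => simp [xall, b2z]
  | cons e G ih =>
    have hx : ∀ n, xall F (e :: G) n = (F e n ^^ xall F G n) := fun n => rfl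
    simp only [hx, b2z_xor, mul_add, Finset.sum_add_distrib]
    rw [ih fun e he => h e (List.mem_cons_of_mem _ he), h e List.mem_cons_self]
    rw [List.length_cons]; push_cast; ring

theorem xall1 : upTo 256 (fun n => !(xall F1 (G1.take 7) n)) = true := by decide +kernel
theorem xall2 : upTo 64 (fun n => !(xall F2 G2 n)) = true := by decide +kernel

theorem s_zero (N : ℕ) (F : G5 → ℕ → Bool) (G : List G5) (c : ℕ → kk) (s : kk)
    (h : ∀ e ∈ G, ∑ n ∈ Finset.range N, c n * b2z (F e n) = s)
    (hx : upTo N (fun n => !(xall F G n)) = true) (hl : (G.length : kk) = 1) : s = 0 := by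
  have := xall_sum N F G c s h
  rw [hl, one_mul] at this
  rw [← this]
  refine Finset.sum_eq_zero fun n hn => ?_
  have := upTo_spec hx (Finset.mem_range.1 hn)
  simp only [Bool.not_eq_true'] at this
  rw [this]; simp [b2z]

theorem len1 : (((G1.take 7).length : ℕ) : kk) = 1 := by decide +kernel
theorem len2 : ((G2.length : ℕ) : kk) = 1 := by decide +kernel

theorem main2 {f : P4} (hf : f ∈ Pw 21 om2) (hi : GInv om2 f) : f ∈ Dn om2 := by
  obtain ⟨c, hc⟩ := decomp W2 om2 low2_lt (fun d hd _ => le2 d hd) hf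
  have hfun := functional W2 om2 sg2 (fun d _ h => lt2_low d h) sc2_low
    (fun p hp => spike_hit sg2 rfl spk7 spk7 spk7 spk0 hp) c hi hc
  have h1 : ∀ e ∈ G2, ∑ n ∈ Finset.range 64, c n * b2z (F2 e n) = coeff (fs sg2) f := by
    intro e he
    rw [← hfun _ (g_unit gOK2 he)]
    exact Finset.sum_congr rfl fun n _ => by rw [sc2_F he]
  have h0 := s_zero 64 F2 G2 c _ h1 xall2 len2
  rw [h0] at h1
  have hS : ∀ d, dg d = 21 → W2.low d = true → mon d ∈ Dn om2 := fun d hd h =>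
    le_sup_right (a := hitSub 21) (Submodule.subset_span ⟨_, by rw [sum_fs, hd], low2_lt d hd h, rfl⟩)
  have hcore := core W2 (Dn om2) F2 G2 c (fun n hn =>
    red_zero W2 _ _ (rels_mem W2 _ hS le_sup_left R2 R2_ok)
      (Nat.eq_of_beq_eq_true (upTo_spec red2 hn))) h1
  have := Submodule.add_mem _ (le_sup_right (a := hitSub 21) hc : _ ∈ Dn om2) hcore
  rwa [sub_add_cancel] at this

theorem inv_bot (om : ℕ → ℕ) (h : ∀ f ∈ Pw 21 om, GInv om f → f ∈ Dn om) :
    QwInv 21 om glSet = ⊥ := by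
  rw [eq_bot_iff]
  rintro _ ⟨⟨f, hf⟩, hi, rfl⟩
  rw [Submodule.mem_bot]
  refine (Submodule.Quotient.mk_eq_zero _).2 ?_
  change f ∈ wDenom 21 om
  refine Dn_mem om hf (h f hf fun M hM => ?_)
  have h1 : f ∈ ⨅ M ∈ glSet, (wDenom 21 om).comap ((substM M).toLinearMap - LinearMap.id) := hi
  rw [Submodule.mem_iInf] at h1
  have h2 := h1 M
  rw [Submodule.mem_iInf] at h2
  exact h2 hM

/-! ### Stability of the denominator -/

theorem substM_sq (M : Matrix (Fin 4) (Fin 4) kk) (g : P4) :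
    substM M (sqTotal g) = sqTotal (substM M g) := by
  have : (substM M).comp sqTotal = sqTotal.comp (substM M) := by
    apply MvPolynomial.algHom_ext
    intro i
    simp only [AlgHom.comp_apply, sqTotal, substM, aeval_X, map_add, map_pow, map_sum, map_smul,
      smul_add, Finset.sum_add_distrib]
    congr 1
    simp only [Fin.sum_univ_four, CharTwo.add_sq, smul_pow, zz]
  exact DFunLike.congr_fun this g

theorem substM_comp (M : Matrix (Fin 4) (Fin 4) kk) (n : ℕ) (g : P4) :
    substM M (homogeneousComponent n g) = homogeneousComponent n (substM M g) := by
  induction g using MvPolynomial.induction_on' with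
  | monomial m b =>
    have hm : (monomial m b : P4).IsHomogeneous m.degree := isHomogeneous_monomial _ rfl
    have hm' := substM_hom M hm
    rw [homogeneousComponent_of_mem ((mem_homogeneousSubmodule _ _).2 hm),
      homogeneousComponent_of_mem ((mem_homogeneousSubmodule _ _).2 hm')]
    split_ifs <;> simp
  | add p q hp hq => simp only [map_add, hp, hq]

theorem hit_stable (M : Matrix (Fin 4) (Fin 4) kk) {f : P4} (hf : f ∈ hitSub 21) :
    substM M f ∈ hitSub 21 := by
  suffices hitSub 21 ≤ (hitSub 21).comap (substM M).toLinearMap from this hf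
  refine Submodule.span_le.2 ?_
  rintro _ ⟨n, hn, g, hg, rfl⟩
  refine Submodule.subset_span ⟨n, hn, substM M g, substM_hom M hg, ?_⟩
  change substM M _ = _
  rw [substM_comp, substM_sq]

/-- The span of the monomials with exponents in `S`. -/
def spn (S : E4 → Prop) : Submodule kk P4 := Submodule.span kk {p | ∃ d, S d ∧ p = mon d}

theorem spn_mul (S T U : E4 → Prop) (h : ∀ a b, S a → T b → U (cmb a b)) {A B : P4}
    (hA : A ∈ spn S) (hB : B ∈ spn T) : A * B ^ 2 ∈ spn U := by
  induction hB using Submodule.span_induction with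
  | mem x hx =>
    obtain ⟨b, hb, rfl⟩ := hx
    induction hA using Submodule.span_induction with
    | mem y hy =>
      obtain ⟨a, ha, rfl⟩ := hy
      rw [← mon_cmb]
      exact Submodule.subset_span ⟨_, h a b ha hb, rfl⟩
    | zero => rw [zero_mul]; exact Submodule.zero_mem _
    | add x y _ _ hx hy => rw [add_mul]; exact Submodule.add_mem _ hx hy
    | smul a x _ hx => rw [smul_mul_assoc]; exact Submodule.smul_mem _ _ hx
  | zero => rw [zero_pow (by norm_num), mul_zero]; exact Submodule.zero_mem _
  | add x y _ _ hx hy => rw [CharTwo.add_sq, mul_add]; exact Submodule.add_mem _ hx hy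
  | smul a x _ hx => rw [smul_pow, mul_smul_comm]; exact Submodule.smul_mem _ _ hx

theorem sub_spn (M : Matrix (Fin 4) (Fin 4) kk) (d : E4) {n : ℕ} (h : dg d = n) :
    substM M (mon d) ∈ spn fun e => dg e = n :=
  mem_span_mon (substM_hom M (h ▸ mon_hom d))

theorem low_stable (M : Matrix (Fin 4) (Fin 4) kk) (d : E4) (hd : dg d = 21) (h : W1.low d = true) :
    substM M (mon d) ∈ spn fun e => dg e = 21 ∧ W1.low e = true := by
  simp only [W1, Bool.or_eq_true, Nat.blt_eq] at h
  have a := dg_par d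
  have b := dg_par (half d)
  have a' := dg_par_le d
  have b' := dg_par_le (half d)
  by_cases h1 : dg (par d) < 3
  · rw [← par_half d, mon_cmb, map_mul, map_pow]
    refine spn_mul (fun e => dg e = 1) (fun e => dg e = 10) _ ?_ (sub_spn M _ (by omega))
      (sub_spn M _ (by omega))
    intro p q hp hq
    refine ⟨by rw [dg_cmb]; omega, ?_⟩
    simp only [W1, Bool.or_eq_true, Nat.blt_eq]
    left
    simp only [dg, par, cmb] at *
    omega
  · rw [← par_half d, mon_cmb, map_mul, map_pow, ← par_half (half d), mon_cmb, map_mul, map_pow]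
    refine spn_mul (fun e => dg e = 3)
      (fun e => ∃ r s, dg r = 1 ∧ dg s = 4 ∧ e = cmb r s) _ ?_ (sub_spn M _ (by omega))
      (spn_mul (fun e => dg e = 1) (fun e => dg e = 4) _ ?_ (sub_spn M _ (by omega))
      (sub_spn M _ (by omega)))
    · rintro q _ hq ⟨r, s, hr, hs, rfl⟩
      refine ⟨by rw [dg_cmb, dg_cmb]; omega, ?_⟩
      simp only [W1, Bool.or_eq_true, Nat.blt_eq]
      clear a b a' b' h1 h hd
      have c := dg_par q
      by_cases h2 : dg (par q) < 3
      · left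
        have : par (cmb q (cmb r s)) = par q := by
          simp only [par, cmb]; ext <;> simp
        rw [this]; exact h2
      · right
        have h3 : dg (half q) = 0 := by omega
        have : par (half (cmb q (cmb r s))) = par r := by
          simp only [dg] at h3
          simp only [par, half, cmb] at *
          ext <;> simp <;> omega
        rw [this]
        have := dg_par r
        omega
    · intro p q hp hq
      exact ⟨p, q, hp, hq, rfl⟩

theorem Dn1_low (d : E4) (hd : dg d = 21) (h : W1.low d = true) : mon d ∈ PwLt 21 om1 :=
  Submodule.subset_span ⟨_, by rw [sum_fs, hd], low1_lt d hd h, rfl⟩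

theorem Dn_stable (M : Matrix (Fin 4) (Fin 4) kk) {f : P4} (hf : f ∈ Dn om1) :
    substM M f ∈ Dn om1 := by
  obtain ⟨a, ha, b, hb, rfl⟩ := Submodule.mem_sup.1 hf
  rw [map_add]
  refine Submodule.add_mem_sup (hit_stable M ha) ?_
  suffices PwLt 21 om1 ≤ (PwLt 21 om1).comap (substM M).toLinearMap from this hb
  refine Submodule.span_le.2 ?_
  rintro _ ⟨d, hd, hw, rfl⟩
  obtain ⟨d, rfl⟩ : ∃ q, fs q = d := ⟨_, fs_surj d⟩
  rw [sum_fs] at hd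
  have h1 := low_stable M d hd (lt1_low d hd hw)
  suffices spn (fun e => dg e = 21 ∧ W1.low e = true) ≤ PwLt 21 om1 from this h1
  refine Submodule.span_le.2 ?_
  rintro _ ⟨e, ⟨he, hl⟩, rfl⟩
  exact Dn1_low e he hl

/-! ### The last step for the first weight -/

/-- Codes of the transvections `x_{b+1} ↦ x_{b+1} + x_b`. -/
def tc : ℕ → ℕ
  | 0 => 33825 + 16
  | 1 => 33825 + 512
  | 2 => 33825 + 16384
  | _ => 33825 + 8

def tL : ℕ → E4 → List E4
  | 0, d => (bin d.2.1).map fun t => (d.1 + t, d.2.1 - t, d.2.2.1, d.2.2.2)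
  | 1, d => (bin d.2.2.1).map fun t => (d.1, d.2.1 + t, d.2.2.1 - t, d.2.2.2)
  | 2, d => (bin d.2.2.2).map fun t => (d.1, d.2.1, d.2.2.1 + t, d.2.2.2 - t)
  | _, d => (bin d.1).map fun t => (d.1 - t, d.2.1, d.2.2.1, d.2.2.2 + t)

theorem tc_inv (b : Fin 4) : Mc (tc b) * Mc (tc b) = 1 := by revert b; decide +kernel

theorem tc_gl (b : Fin 4) : Mc (tc b) ∈ glSet :=
  (Matrix.isUnit_iff_isUnit_det _).2 (Matrix.isUnit_det_of_right_inverse (tc_inv b))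

theorem lf_tc (b i : Fin 4) : lf (Mc (tc b)) i = X i + if i = b + 1 then X b else 0 := by
  have h : ∀ j, Mc (tc b) i j = if j = i ∨ (i = b + 1 ∧ j = b) then 1 else 0 := by
    intro j
    have ht : tb (tc b) (4 * i.val + j.val) = decide (j = i ∨ (i = b + 1 ∧ j = b)) := by
      revert b i j; decide +kernel
    rw [Mc, ht]; simp [b2z]
  simp only [lf, h, Fin.sum_univ_four]
  fin_cases b <;> fin_cases i <;> simp <;> ring

theorem tL_eq (b : Fin 4) (d : E4) : substM (Mc (tc b)) (mon d) = evL (tL b d) := by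
  rw [substM_mon]
  simp only [lf_tc]
  fin_cases b
  · simp [tL, add_pow_bin, evL, mul_sum', sum_mul_sum', Function.comp_def, mon_eq]
    congr 1; refine List.map_congr_left fun t _ => ?_
    ring
  · simp [tL, add_pow_bin, evL, mul_sum', sum_mul_sum', Function.comp_def, mon_eq]
    congr 1; refine List.map_congr_left fun t _ => ?_
    ring
  · simp [tL, add_pow_bin, evL, mul_sum', sum_mul_sum', Function.comp_def, mon_eq]
    congr 1; refine List.map_congr_left fun t _ => ?_
    ring
  · simp [tL, add_pow_bin, evL, mul_sum', sum_mul_sum', Function.comp_def, mon_eq]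
    congr 1; refine List.map_congr_left fun t _ => ?_
    ring

def eL (p : ℕ) : List E4 := [W1.expo p, W1.expo (p + 84), W1.expo (p + 168), W1.expo (p + 252)]

def ee (p : Fin 4) : P4 := Phi W1 (emask p)

theorem ee_eq (p : Fin 4) : ee p = evL (eL p) := by
  have := p.isLt
  have h : ∀ k, k ≤ 252 → p.val + k < W1.N := fun k hk => by change _ < 256; omega
  have h0 : p.val < W1.N := h 0 (by omega)
  rw [ee, emask, Phi_xor, Phi_xor, Phi_xor, Phi_pow W1 (h0), Phi_pow W1 (h 84 (by omega)),
    Phi_pow W1 (h 168 (by omega)), Phi_pow W1 (h 252 (by omega))]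
  simp [eL, evL, add_assoc]

theorem subst_evL (b : Fin 4) (l : List E4) :
    substM (Mc (tc b)) (evL l) = evL (l.flatMap (tL b)) := by
  rw [evL_flatMap, evL, map_list_sum, List.map_map]
  congr 1
  refine List.map_congr_left fun d _ => tL_eq b d

def nx (b : ℕ) : ℕ := if b = 3 then 0 else b + 1

def tchk (b p : ℕ) : Bool :=
  okL W1 ((eL p).flatMap (tL b)) &&
    Nat.beq (red (R1.map Prod.snd) (maskL W1 ((eL p).flatMap (tL b)) ^^^ emask p ^^^
      (if p = b then emask (nx b) else 0))) 0

theorem tchk_ok : upTo 4 (fun b => upTo 4 fun p => tchk b p) = true := by decide +kernel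

theorem R1_mem (S : Submodule kk P4) (hS : Dn om1 ≤ S) :
    ∀ r ∈ R1.map Prod.snd, Phi W1 r.1 ∈ S :=
  rels_mem W1 S (fun d hd h => hS (le_sup_right (a := hitSub 21) (Dn1_low d hd h)))
    (le_sup_left.trans hS) R1 R1_ok

theorem T_ee (b p : Fin 4) : substM (Mc (tc b)) (ee p) + ee p + (if p = b then ee (b + 1) else 0)
    ∈ Dn om1 := by
  have h := upTo_spec (upTo_spec tchk_ok b.isLt) p.isLt
  simp only [tchk, Bool.and_eq_true] at h
  have h1 := ok_mem W1 (Dn om1) (fun d hd h => (le_sup_right (a := hitSub 21) (Dn1_low d hd h))) _ h.1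
  have h2 := red_zero W1 (Dn om1) _ (R1_mem _ le_rfl) (Nat.eq_of_beq_eq_true h.2)
  rw [Phi_xor, Phi_xor] at h2
  have h3 := Submodule.add_mem _ h1 h2
  have h4 : Phi W1 (if p.val = b.val then emask (nx b) else 0) = if p = b then ee (b + 1) else 0 := by
    by_cases hp : p = b
    · rw [if_pos hp, if_pos (by rw [hp]), ee]
      have : nx b = ((b + 1 : Fin 4) : ℕ) := by
        clear h h1 h2 h3 hp; revert b; decide
      rw [this]
    · rw [if_neg hp, if_neg fun h => hp (Fin.ext h), Phi_zero]
  rw [h4, ← subst_evL, ← ee_eq] at h3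
  have h5 : ∀ x y z w : P4, x + y + (y + z + w) = x + z + w := by
    intro x y z w
    have : x + y + (y + z + w) = x + z + w + (y + y) := by ring
    rw [this, two0, add_zero]
  rw [h5] at h3
  exact h3

theorem last_step {f : P4} (a : Fin 4 → kk) (hf : f + ∑ p, a p • ee p ∈ Dn om1)
    (hi : ∀ b : Fin 4, substM (Mc (tc b)) f + f ∈ Dn om1) : f ∈ Dn om1 := by
  have key : ∀ b, a b • ee (b + 1) ∈ Dn om1 := by
    intro b
    have h1 := Dn_stable (Mc (tc b)) hf
    have h2 := Submodule.add_mem _ (Submodule.add_mem _ h1 (hi b)) hf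
    have h3 : ∑ p, a p • (substM (Mc (tc b)) (ee p) + ee p + (if p = b then ee (b + 1) else 0))
      ∈ Dn om1 := Submodule.sum_mem _ fun p _ => Submodule.smul_mem _ _ (T_ee b p)
    have h4 := Submodule.add_mem _ h2 h3
    simp only [smul_add, Finset.sum_add_distrib, map_add, map_sum, map_smul, smul_ite, smul_zero,
      Finset.sum_ite_eq', Finset.mem_univ, if_true] at h4
    have h5 : ∀ x y z w v : P4, x + z + (x + y) + (y + w) + (z + w + v) = v := by
      intro x y z w v
      have : x + z + (x + y) + (y + w) + (z + w + v) =
        (x + x) + (y + y) + (z + z) + (w + w) + v := by ring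
      rw [this]; simp only [two0, zero_add]
    rwa [h5] at h4
  by_cases h : ∃ b, a b ≠ 0
  · obtain ⟨b, hb⟩ := h
    have h1 : a b = 1 := by
      generalize a b = x at hb; revert x; decide
    have h0 := key b
    rw [h1, one_smul] at h0
    have step : ∀ q, ee q ∈ Dn om1 → ee (q + 1) ∈ Dn om1 := by
      intro q hq
      have h2 := T_ee q q
      rw [if_pos rfl] at h2
      exact (Submodule.add_mem_iff_right _ (Submodule.add_mem _ (Dn_stable _ hq) hq)).1 h2
    have hall : ∀ q, ee q ∈ Dn om1 := by
      have h1 := step _ h0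
      have h2 := step _ h1
      have h3 := step _ h2
      intro q
      have : q = b + 1 ∨ q = b + 1 + 1 ∨ q = b + 1 + 1 + 1 ∨ q = b + 1 + 1 + 1 + 1 := by
        clear * -; revert q b; decide
      rcases this with e | e | e | e
      · rw [e]; exact h0
      · rw [e]; exact h1
      · rw [e]; exact h2
      · rw [e]; exact h3
    exact (Submodule.add_mem_iff_left _
      (Submodule.sum_mem _ fun p _ => Submodule.smul_mem _ _ (hall p))).1 hf
  · push Not at h
    simpa [h] using hf

def S1 : Submodule kk P4 := Dn om1 ⊔ Submodule.span kk (Set.range ee)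

theorem ee_mem (p : Fin 4) : Phi W1 (emask p) ∈ S1 :=
  le_sup_right (a := Dn om1) (Submodule.subset_span ⟨p, rfl⟩)

/-- Expressions of the entries of `Es`. -/
def ex : List ℕ := [emask 0, emask 1, emask 2 ^^^ emask 3, emask 3]

theorem es_ok : (Es.zip ex).all (fun r => Nat.beq (red (R1.map Prod.snd) (r.1.1 ^^^ r.2)) 0) = true := by
  decide +kernel
theorem es_zip : (Es.zip ex).map Prod.fst = Es := by decide +kernel
theorem ex_zip : (Es.zip ex).map Prod.snd = ex := by decide +kernel

theorem ex_mem : ∀ m ∈ ex, Phi W1 m ∈ S1 := by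
  intro m hm
  simp only [ex, List.mem_cons, List.not_mem_nil, or_false] at hm
  rcases hm with rfl | rfl | rfl | rfl
  · exact ee_mem 0
  · exact ee_mem 1
  · rw [Phi_xor]; exact Submodule.add_mem _ (ee_mem 2) (ee_mem 3)
  · exact ee_mem 3

theorem Es_mem : ∀ r ∈ Es, Phi W1 r.1 ∈ S1 := by
  intro r hr
  rw [← es_zip] at hr
  obtain ⟨q, hq, rfl⟩ := List.mem_map.1 hr
  have h1 := List.all_eq_true.1 es_ok q hq
  have h2 := red_zero W1 S1 _ (R1_mem _ le_sup_left) (Nat.eq_of_beq_eq_true h1)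
  have h3 := ex_mem q.2 (by rw [← ex_zip]; exact List.mem_map_of_mem hq)
  rw [Phi_xor] at h2
  exact (Submodule.add_mem_iff_left _ h3).1 h2

theorem main1 {f : P4} (hf : f ∈ Pw 21 om1) (hi : GInv om1 f) : f ∈ Dn om1 := by
  obtain ⟨c, hc⟩ := decomp W1 om1 low1_lt le1 hf
  have hfun := functional W1 om1 sg1 lt1_low sc1_low
    (fun p hp => spike_hit sg1 rfl spk15 spk3 spk3 spk0 hp) c hi hc
  have h1 : ∀ e ∈ G1, ∑ n ∈ Finset.range 256, c n * b2z (F1 e n) = coeff (fs sg1) f := by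
    intro e he
    rw [← hfun _ (g_unit gOK1 he)]
    exact Finset.sum_congr rfl fun n _ => by rw [sc1_F he]
  have h0 := s_zero 256 F1 (G1.take 7) c _ (fun e he => h1 e (List.mem_of_mem_take he)) xall1 len1
  rw [h0] at h1
  have hcore := core W1 S1 F1 G1 c (fun n hn => by
    have r := Nat.eq_of_beq_eq_true (upTo_spec red1 hn)
    have r1 := red_zero W1 S1 _ Es_mem r
    have r2 := red_mem W1 S1 _ (R1_mem S1 le_sup_left) (2 ^ n ^^^ gsum F1 G1 n)
    exact (Submodule.add_mem_iff_left _ r1).1 r2) h1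
  have hs := Submodule.add_mem _ (le_sup_left (b := Submodule.span kk (Set.range ee))
    (le_sup_right (a := hitSub 21) hc : _ ∈ Dn om1) : _ ∈ S1) hcore
  rw [sub_add_cancel] at hs
  obtain ⟨x, hx, y, hy, hxy⟩ := Submodule.mem_sup.1 hs
  obtain ⟨a, rfl⟩ := (Submodule.mem_span_range_iff_exists_fun kk).1 hy
  refine last_step a ?_ ?_
  · rw [← hxy, add_assoc, two0, add_zero]; exact hx
  · intro b
    have := wDenom_le _ (hi _ (tc_gl b))
    rwa [CharTwo.sub_eq_add] at this

/-- For `n = 21` and the weight vectors `ω₁ = (3,3,1,1)` and `ω₂ = (3,3,3)` of degree `21`,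
the `GL_4(F_2)`-invariants of the weight subquotients `(Q_21)^{ω₁}` and `(Q_21)^{ω₂}` are
both trivial. -/
theorem statement_12 :
    QwInv 21 (fun j => if j < 2 then 3 else if j < 4 then 1 else 0) glSet = ⊥ ∧
    QwInv 21 (fun j => if j < 3 then 3 else 0) glSet = ⊥ := by
  exact ⟨inv_bot om1 fun _ hf hi => main1 hf hi, inv_bot om2 fun _ hf hi => main2 hf hi⟩

end
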